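/- arXiv:1411.6963 — 4 statements merged into one kernel-verified Lean document; each statement's English description precedes it below -/
import Mathlib

section
/- For an integer b ≥ 2, the quadratic form f^{2,b}_1(x,y,z,w) = 2·x² + b·y² + (z² + z·w + w²) represents every nonnegative integer (with x, y, z, w ∈ ℤ) if and only if b ∈ {2, 3, 4, 5, 6, 7, 8, 9, 10}. -/
/-!
The ternary form `2x² + z² + zw + w²` misses `10`, so a universal `2x² + by² + z² + zw + w²` needs
some `y ≠ 0` in a representation of `10`, whence `b ≤ 10`.

Conversely, the vectors `(1, 1, -2)`, `(2, -1, -1)` and `(2, 2, 2)` span a sublattice of `ℤ³` on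
which the sum of squares is `6 (2x² + z² + zw + w²)`, and up to signs of the coordinates every
integral vector whose norm is a multiple of `6` lies in it (`exists_form_of_six_mul`). By
the three-squares theorem the ternary form therefore represents every `n` which is not of the form
`4ᵏ(16m + 10)`. For `2 ≤ b ≤ 10` and `n ≡ 10 mod 16` one subtracts `b y²` with `y ∈ {1, 2}` to
leave this exceptional set, and multiples of `4` are handled by scaling.

The three-squares theorem is proved along Dirichlet's lines. A positive definite integral ternary
form of determinant one is reduced until it is visibly a sum of three squares
(`ternary_sum_three_sq`). If `-d` is a square modulo `dn - 1`, then `n` is a value of such a form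
(`sum_three_sq_of_dvd`), and a suitable `d` is supplied by Dirichlet's theorem on primes in
arithmetic progressions together with quadratic reciprocity for the Jacobi symbol.
-/

open scoped NumberTheorySymbols

/-! ### Reduction of integral forms -/

lemma exists_shift (a b : ℤ) (ha : 0 < a) : ∃ t : ℤ, 4 * (b + t * a) ^ 2 ≤ a ^ 2 := by
  -- `-t` is the integer nearest to `b / a`
  refine ⟨-((2 * b + a) / (2 * a)), ?_⟩
  have h1 := Int.emod_add_mul_ediv (2 * b + a) (2 * a)
  have h2 := Int.emod_nonneg (2 * b + a) (b := 2 * a) (by omega)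
  have h3 := Int.emod_lt_of_pos (2 * b + a) (b := 2 * a) (by omega)
  set q := (2 * b + a) / (2 * a)
  set r := (2 * b + a) % (2 * a)
  have h4 : 2 * (b + -q * a) = r - a := by linarith
  have h5 : 4 * (b + -q * a) ^ 2 = (r - a) ^ 2 := by rw [← h4]; ring
  rw [h5]
  nlinarith

lemma pos_of_det_pos {a b c : ℤ} (ha : 0 < a) (h : 0 < a * c - b ^ 2) : 0 < c :=
  pos_of_mul_pos_right (by linarith [sq_nonneg b] : 0 < a * c) ha.le

/-- A positive definite binary form `a x² + 2b xy + c y²` of determinant `Δ` takes a value `m` with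
`3m² ≤ 4Δ` at the first column of some matrix of determinant one. -/
lemma binary_reduction (k : ℕ) : ∀ a b c : ℤ, a ≤ k → 0 < a → 0 < a * c - b ^ 2 →
    ∃ p q r s : ℤ, p * s - q * r = 1 ∧ 0 < a * p ^ 2 + 2 * b * p * r + c * r ^ 2 ∧
      3 * (a * p ^ 2 + 2 * b * p * r + c * r ^ 2) ^ 2 ≤ 4 * (a * c - b ^ 2) := by
  induction k with
  | zero => intro a b c h1 h2; simp at h1; omega
  | succ k ih =>
    intro a b c hk ha hD
    obtain ⟨t, ht⟩ := exists_shift a b ha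
    obtain ⟨b', hb'⟩ : ∃ b', b' = b + t * a := ⟨_, rfl⟩
    obtain ⟨c', hc'⟩ : ∃ c', c' = c + 2 * t * b + t ^ 2 * a := ⟨_, rfl⟩
    have hD' : a * c' - b' ^ 2 = a * c - b ^ 2 := by rw [hb', hc']; ring
    rw [← hb'] at ht
    by_cases h : a ≤ c'
    · refine ⟨1, 0, 0, 1, by ring, by simpa using ha, ?_⟩
      have : a * a ≤ a * c' := mul_le_mul_of_nonneg_left h ha.le
      nlinarith
    · have hc0 : 0 < c' := pos_of_det_pos ha (hD' ▸ hD)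
      obtain ⟨p, q, r, s, h1, h2, h3⟩ := ih c' (-b') a (by push_cast at hk; omega) hc0
        (by linarith [hD', (by ring : c' * a - (-b') ^ 2 = a * c' - b' ^ 2)])
      have e : a * (-r + t * p) ^ 2 + 2 * b * (-r + t * p) * p + c * p ^ 2 =
          c' * p ^ 2 + 2 * (-b') * p * r + a * r ^ 2 := by rw [hb', hc']; ring
      refine ⟨-r + t * p, -s + t * q, p, q, by linarith, ?_, ?_⟩
      · rw [e]; exact h2
      · rw [e]; linarith [(by ring : c' * a - (-b') ^ 2 = a * c' - b' ^ 2)]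

lemma eq_one_of_reduced {a m : ℤ} (ha : 0 < a) (hm0 : 0 < m) (h1 : 3 * a ^ 2 ≤ 4 * m)
    (hm : 3 * m ^ 2 ≤ 4 * a) : a = 1 ∧ m = 1 := by
  have ha1 : a = 1 := by
    by_contra hne
    have ha2 : 2 ≤ a := by omega
    have h2 : (3 * a ^ 2) ^ 2 ≤ (4 * m) ^ 2 := pow_le_pow_left₀ (by positivity) h1 2
    have h3 : 27 * a ^ 3 * a ≤ 64 * a := by linarith
    have h4 : 27 * a ^ 3 ≤ 64 := le_of_mul_le_mul_right h3 ha
    have h5 : (2 : ℤ) ^ 3 ≤ a ^ 3 := pow_le_pow_left₀ (by norm_num) ha2 3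
    omega
  refine ⟨ha1, ?_⟩
  rw [ha1] at hm
  nlinarith

/-- Every value of a positive definite integral ternary form (with even cross terms) of determinant
one is a sum of three squares. -/
lemma ternary_sum_three_sq (k : ℕ) : ∀ a b c d e f : ℤ, a ≤ k → 0 < a → 0 < a * d - b ^ 2 →
    a * d * f + 2 * b * c * e - a * e ^ 2 - f * b ^ 2 - d * c ^ 2 = 1 →
    ∀ x y z : ℤ, ∃ u v w : ℤ,
      a * x ^ 2 + d * y ^ 2 + f * z ^ 2 + 2 * b * x * y + 2 * c * x * z + 2 * e * y * z =
        u ^ 2 + v ^ 2 + w ^ 2 := by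
  induction k with
  | zero => intro a b c d e f h1 h2; simp at h1; omega
  | succ k ih =>
    intro a b c d e f hk ha hA hdet x y z
    -- `a Q - (a x + b y + c z)²` is a binary form in `y, z` of determinant `a`
    have hdisc : (a * d - b ^ 2) * (a * f - c ^ 2) - (a * e - b * c) ^ 2 = a := by
      linear_combination a * hdet
    obtain ⟨p, q, r, s, hdet1, hm0, hm⟩ := binary_reduction (a * d - b ^ 2).toNat
      (a * d - b ^ 2) (a * e - b * c) (a * f - c ^ 2) (Int.self_le_toNat _) hA
      (by rw [hdisc]; exact ha)
    rw [hdisc] at hm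
    set m := (a * d - b ^ 2) * p ^ 2 + 2 * (a * e - b * c) * p * r + (a * f - c ^ 2) * r ^ 2
      with hmdef
    obtain ⟨t, ht⟩ := exists_shift a (b * p + c * r) ha
    -- coefficients after `y = pY + qZ`, `z = rY + sZ`, `x = X + tY`
    obtain ⟨b2, hb2⟩ : ∃ b2, b2 = b * p + c * r + t * a := ⟨_, rfl⟩
    obtain ⟨c2, hc2⟩ : ∃ c2, c2 = b * q + c * s := ⟨_, rfl⟩
    obtain ⟨d2, hd2⟩ : ∃ d2, d2 = d * p ^ 2 + 2 * e * p * r + f * r ^ 2 +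
      2 * t * (b * p + c * r) + t ^ 2 * a := ⟨_, rfl⟩
    obtain ⟨e2, he2⟩ : ∃ e2, e2 = d * p * q + e * (p * s + q * r) + f * r * s + t * c2 := ⟨_, rfl⟩
    obtain ⟨f2, hf2⟩ : ∃ f2, f2 = d * q ^ 2 + 2 * e * q * s + f * s ^ 2 := ⟨_, rfl⟩
    rw [← hb2] at ht
    have hm2 : a * d2 - b2 ^ 2 = m := by rw [hmdef, hb2, hd2]; ring
    have hdet2 : a * d2 * f2 + 2 * b2 * c2 * e2 - a * e2 ^ 2 - f2 * b2 ^ 2 - d2 * c2 ^ 2 = 1 := by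
      have : a * d2 * f2 + 2 * b2 * c2 * e2 - a * e2 ^ 2 - f2 * b2 ^ 2 - d2 * c2 ^ 2 =
          (a * d * f + 2 * b * c * e - a * e ^ 2 - f * b ^ 2 - d * c ^ 2) *
            (p * s - q * r) ^ 2 := by
        rw [he2, hf2, hd2, hc2, hb2]; ring
      rw [this, hdet, hdet1]; norm_num
    obtain ⟨Y, hY⟩ : ∃ Y, Y = s * y - q * z := ⟨_, rfl⟩
    obtain ⟨Z, hZ⟩ : ∃ Z, Z = -r * y + p * z := ⟨_, rfl⟩
    obtain ⟨X, hX⟩ : ∃ X, X = x - t * Y := ⟨_, rfl⟩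
    have hy : y = p * Y + q * Z := by rw [hY, hZ]; linear_combination (-y) * hdet1
    have hz : z = r * Y + s * Z := by rw [hY, hZ]; linear_combination (-z) * hdet1
    have hx : x = X + t * Y := by rw [hX]; ring
    have hQ : a * x ^ 2 + d * y ^ 2 + f * z ^ 2 + 2 * b * x * y + 2 * c * x * z + 2 * e * y * z =
        a * X ^ 2 + d2 * Y ^ 2 + f2 * Z ^ 2 + 2 * b2 * X * Y + 2 * c2 * X * Z + 2 * e2 * Y * Z := by
      clear_value m
      clear hX hY hZ
      subst hx hy hz hb2 he2 hd2 hf2 hc2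
      ring
    rw [hQ]
    by_cases h : a ≤ d2
    · have h1 : 3 * a ^ 2 ≤ 4 * m := by
        have := mul_le_mul_of_nonneg_left h ha.le
        linarith [sq a]
      obtain ⟨ha1, hm1⟩ := eq_one_of_reduced ha hm0 h1 hm
      rw [hm1] at hm2
      rw [ha1] at hm2 hdet2 ⊢
      refine ⟨X + b2 * Y + c2 * Z, Y + (e2 - b2 * c2) * Z, Z, ?_⟩
      have hd : d2 = 1 + b2 ^ 2 := by linarith
      subst hd
      linear_combination Z ^ 2 * hdet2
    · have hd0 : 0 < d2 := pos_of_det_pos ha (hm2 ▸ hm0)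
      obtain ⟨u, v, w, huvw⟩ := ih d2 b2 e2 a c2 f2 (by push_cast at hk; omega) hd0
        (by linarith [mul_comm a d2]) (by linear_combination hdet2) Y X Z
      exact ⟨u, v, w, by rw [← huvw]; ring⟩

/-! ### The three-squares theorem -/

/-- If `-d` is a square modulo `dn - 1`, then `n` is a sum of three squares. -/
lemma sum_three_sq_of_dvd (n d k : ℤ) (hn : 1 < n) (hd : 0 < d) (h : d * n - 1 ∣ k ^ 2 + d) :
    ∃ u v w : ℤ, n = u ^ 2 + v ^ 2 + w ^ 2 := by
  obtain ⟨m, hm⟩ := h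
  have h1 : 0 < d * n - 1 := by nlinarith
  have hm0 : 0 < m := by
    by_contra hcon
    nlinarith [sq_nonneg k, mul_nonneg h1.le (by omega : 0 ≤ -m)]
  obtain ⟨u, v, w, huvw⟩ := ternary_sum_three_sq m.toNat m k 1 (d * n - 1) 0 n
    (Int.self_le_toNat _) hm0 (by linarith [mul_comm m (d * n - 1)])
    (by linear_combination (-n) * hm) 0 0 1
  exact ⟨u, v, w, by linarith⟩

lemma exists_dvd_sq_add (p : ℕ) [Fact p.Prime] (d : ℤ) (h : J(-d | p) = 1) :
    ∃ k : ℤ, (p : ℤ) ∣ k ^ 2 + d := by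
  obtain ⟨y, hy⟩ := ZMod.isSquare_of_jacobiSym_eq_one h
  refine ⟨y.val, ?_⟩
  rw [← ZMod.intCast_zmod_eq_zero_iff_dvd]
  push_cast at hy ⊢
  rw [ZMod.natCast_zmod_val]
  linear_combination -hy

lemma sum_three_sq_two_mod_four (n : ℕ) (hn : n % 4 = 2) :
    ∃ u v w : ℤ, (n : ℤ) = u ^ 2 + v ^ 2 + w ^ 2 := by
  have hcop : (n - 1).Coprime (4 * n) := by
    have h1 : (n - 1).Coprime n := by
      have := Nat.coprime_self_add_right (m := n - 1) (n := 1)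
      rw [show n - 1 + 1 = n by omega] at this
      simpa using this
    have h2 : (n - 1).Coprime (2 ^ 2) :=
      Nat.Coprime.pow_right _ (Nat.coprime_two_right.2 (Nat.odd_iff.2 (by omega)))
    exact Nat.Coprime.mul_right h2 h1
  obtain ⟨p, hpn, hp, hmod⟩ :=
    Nat.forall_exists_prime_gt_and_modEq n (q := 4 * n) (by omega) hcop
  have : Fact p.Prime := ⟨hp⟩
  obtain ⟨j, hj⟩ := (Nat.modEq_iff_dvd' (by omega)).1 hmod.symm
  -- `p = d n - 1` with `d = 4 j + 1`
  have hpd : p + 1 = (4 * j + 1) * n := by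
    have : p = 4 * n * j + (n - 1) := by omega
    rw [this]; zify [show 1 ≤ n by omega]; ring
  have hp4 : p % 4 = 1 := by
    have : (p + 1) % 4 = 2 := by rw [hpd, Nat.mul_mod, hn]; omega
    omega
  have hJ : J(-((4 * j + 1 : ℕ) : ℤ) | p) = 1 := by
    have hdodd : Odd (4 * j + 1) := ⟨2 * j, by ring⟩
    rw [jacobiSym.neg _ (Nat.odd_iff.2 (by omega)), ZMod.χ₄_nat_one_mod_four hp4, one_mul,
      jacobiSym.quadratic_reciprocity_one_mod_four' hdodd hp4]
    have : J((p : ℤ) | 4 * j + 1) = J(-1 | 4 * j + 1) := by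
      apply jacobiSym.mod_left'
      apply Int.ModEq.symm
      rw [Int.modEq_iff_dvd]
      exact ⟨n, by push_cast; linarith [(by exact_mod_cast hpd : (p : ℤ) + 1 = (4 * j + 1) * n)]⟩
    rw [this, jacobiSym.at_neg_one hdodd, ZMod.χ₄_nat_one_mod_four (by omega)]
  obtain ⟨k, hk⟩ := exists_dvd_sq_add p _ hJ
  refine sum_three_sq_of_dvd n (4 * j + 1 : ℕ) k (by omega) (by omega) ?_
  have : ((4 * j + 1 : ℕ) : ℤ) * n - 1 = p := by
    have : (p : ℤ) + 1 = ((4 * j + 1 : ℕ) : ℤ) * n := by exact_mod_cast hpd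
    linarith
  rwa [this]

/-- The hypotheses on `c` make `(c n - 1) / 2` odd, and make the Jacobi symbol `(-d / p)` equal to
`1` for `d = 8 j + c` and every prime `p` with `2 p = d n - 1`. -/
lemma sum_three_sq_odd_aux (n c : ℕ) (hn1 : 1 < n)
    (hc : c = 1 ∧ n % 8 = 3 ∨ c = 3 ∧ (n % 8 = 1 ∨ n % 8 = 5)) :
    ∃ u v w : ℤ, (n : ℤ) = u ^ 2 + v ^ 2 + w ^ 2 := by
  obtain ⟨g, hg⟩ : ∃ g, 2 * g + 1 = c * n := ⟨(c * n - 1) / 2, by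
    rcases hc with ⟨rfl, h⟩ | ⟨rfl, h⟩ <;> omega⟩
  have hg4 : c = 1 ∧ g % 4 = 1 ∨ c = 3 ∧ (g % 4 = 1 ∨ g % 4 = 3) := by
    rcases hc with ⟨rfl, h⟩ | ⟨rfl, h⟩ <;> omega
  have hcop : g.Coprime (4 * n) := by
    have h1 : g.Coprime n := by
      have h0 : g.Coprime (2 * g + 1) := by simp
      rw [hg] at h0
      exact h0.coprime_mul_left_right
    have h2 : g.Coprime (2 ^ 2) :=
      Nat.Coprime.pow_right _ (Nat.coprime_two_right.2 (Nat.odd_iff.2 (by omega)))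
    exact Nat.Coprime.mul_right h2 h1
  obtain ⟨p, hpn, hp, hmod⟩ :=
    Nat.forall_exists_prime_gt_and_modEq g (q := 4 * n) (by omega) hcop
  have : Fact p.Prime := ⟨hp⟩
  obtain ⟨j, hj⟩ := (Nat.modEq_iff_dvd' (by omega)).1 hmod.symm
  have hpj : p = 4 * (n * j) + g := by rw [← mul_assoc, ← hj]; omega
  obtain ⟨d, hd⟩ : ∃ d, d = 8 * j + c := ⟨_, rfl⟩
  have hpd : 2 * p + 1 = d * n := by rw [hpj, hd, add_mul, ← hg]; ring
  have hdodd : Odd d := Nat.odd_iff.2 (by omega)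
  have hpodd : Odd p := Nat.odd_iff.2 (by omega)
  have h2p : J((2 : ℤ) | d) * J((p : ℤ) | d) = J(-1 | d) := by
    rw [← jacobiSym.mul_left]
    apply jacobiSym.mod_left'
    apply Int.ModEq.symm
    rw [Int.modEq_iff_dvd]
    exact ⟨n, by linarith [(by exact_mod_cast hpd : 2 * (p : ℤ) + 1 = d * n)]⟩
  rw [jacobiSym.at_two hdodd, jacobiSym.at_neg_one hdodd, ZMod.χ₈_nat_eq_if_mod_eight,
    ZMod.χ₄_nat_eq_if_mod_four] at h2p
  have hJ : J(-(d : ℤ) | p) = 1 := by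
    rw [jacobiSym.neg _ hpodd]
    rcases hg4 with ⟨h, h'⟩ | ⟨h, h' | h'⟩
    · have hd8 : d % 8 = 1 := by omega
      have hp4 : p % 4 = 1 := by omega
      rw [ZMod.χ₄_nat_one_mod_four hp4,
        jacobiSym.quadratic_reciprocity_one_mod_four' hdodd hp4]
      simpa [hd8, show d % 2 = 1 by omega, show d % 4 = 1 by omega] using h2p
    · have hd8 : d % 8 = 3 := by omega
      have hp4 : p % 4 = 1 := by omega
      rw [ZMod.χ₄_nat_one_mod_four hp4,
        jacobiSym.quadratic_reciprocity_one_mod_four' hdodd hp4]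
      simpa [hd8, show d % 2 = 1 by omega, show d % 4 = 3 by omega] using h2p
    · have hd8 : d % 8 = 3 := by omega
      have hp4 : p % 4 = 3 := by omega
      rw [ZMod.χ₄_nat_three_mod_four hp4,
        jacobiSym.quadratic_reciprocity_three_mod_four (by omega) hp4]
      simpa [hd8, show d % 2 = 1 by omega, show d % 4 = 3 by omega] using h2p
  obtain ⟨k, hk⟩ := exists_dvd_sq_add p _ hJ
  -- both `k` and `k + p` are square roots of `-d` modulo `p`, and the odd one works modulo `2 p`
  obtain ⟨k', hk', hkodd⟩ : ∃ k' : ℤ, (p : ℤ) ∣ k' ^ 2 + d ∧ k' % 2 = 1 := by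
    by_cases hkp : k % 2 = 1
    · exact ⟨k, hk, hkp⟩
    · refine ⟨k + p, ?_, ?_⟩
      · obtain ⟨i, hi⟩ := hk
        exact ⟨i + 2 * k + p, by linear_combination hi⟩
      · have := Nat.odd_iff.1 hpodd
        omega
  refine sum_three_sq_of_dvd n d k' (by omega) (by omega) ?_
  have : (d : ℤ) * n - 1 = 2 * p := by
    have : 2 * (p : ℤ) + 1 = d * n := by exact_mod_cast hpd
    linarith
  rw [this]
  refine IsCoprime.mul_dvd ?_ ?_ hk'
  · have : IsCoprime ((2 : ℕ) : ℤ) (p : ℤ) :=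
      Nat.isCoprime_iff_coprime.2 (Nat.coprime_two_left.2 hpodd)
    exact_mod_cast this
  · obtain ⟨i, hi⟩ := hdodd
    have hi' : (d : ℤ) = 2 * i + 1 := by exact_mod_cast hi
    have hk2 : k' = 2 * (k' / 2) + 1 := by omega
    rw [hi', hk2]
    exact ⟨2 * (k' / 2) ^ 2 + 2 * (k' / 2) + i + 1, by ring⟩

lemma sum_three_sq_odd (n : ℕ) (hn : n % 8 = 1 ∨ n % 8 = 3 ∨ n % 8 = 5) :
    ∃ u v w : ℤ, (n : ℤ) = u ^ 2 + v ^ 2 + w ^ 2 := by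
  by_cases h1 : n = 1
  · exact ⟨1, 0, 0, by simp [h1]⟩
  rcases hn with h | h | h
  · exact sum_three_sq_odd_aux n 3 (by omega) (by omega)
  · exact sum_three_sq_odd_aux n 1 (by omega) (by omega)
  · exact sum_three_sq_odd_aux n 3 (by omega) (by omega)

/-! ### The ternary form `2x² + z² + zw + w²` -/

lemma exists_sq_eq_mod_three (a : ℤ) : ∃ a' : ℤ, a' ^ 2 = a ^ 2 ∧ (a' % 3 = 0 ∨ a' % 3 = 1) := by
  rcases (by omega : a % 3 = 0 ∨ a % 3 = 1 ∨ (-a) % 3 = 1) with h | h | h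
  · exact ⟨a, rfl, Or.inl h⟩
  · exact ⟨a, rfl, Or.inr h⟩
  · exact ⟨-a, by ring, Or.inr h⟩

lemma sq_emod_three {a : ℤ} (h : a % 3 = 0 ∨ a % 3 = 1) : a ^ 2 % 3 = a % 3 := by
  rcases h with h | h <;> simp [pow_two, Int.mul_emod, h]

lemma sq_emod_two (a : ℤ) : a ^ 2 % 2 = a % 2 := by
  rcases Int.emod_two_eq_zero_or_one a with h | h <;> simp [pow_two, Int.mul_emod, h]

/-- A representation of `6n` as a sum of three squares gives one of `n` by `2x² + z² + zw + w²`: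
after sign changes the vector is `z (1, 1, -2) + w (2, -1, -1) + x (2, 2, 2)`. -/
lemma exists_form_of_six_mul (n : ℤ) (h : ∃ a b c : ℤ, 6 * n = a ^ 2 + b ^ 2 + c ^ 2) :
    ∃ x z w : ℤ, n = 2 * x ^ 2 + (z ^ 2 + z * w + w ^ 2) := by
  obtain ⟨a₀, b₀, c₀, h⟩ := h
  obtain ⟨a, ha, ha3⟩ := exists_sq_eq_mod_three a₀
  obtain ⟨b, hb, hb3⟩ := exists_sq_eq_mod_three b₀
  obtain ⟨c, hc, hc3⟩ := exists_sq_eq_mod_three c₀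
  rw [← ha, ← hb, ← hc] at h
  have a3 := sq_emod_three ha3
  have b3 := sq_emod_three hb3
  have c3 := sq_emod_three hc3
  have a2 := sq_emod_two a
  have b2 := sq_emod_two b
  have c2 := sq_emod_two c
  obtain ⟨x, hx⟩ : ∃ x, a + b + c = 6 * x := ⟨(a + b + c) / 6, by omega⟩
  obtain ⟨w, hw⟩ : ∃ w, a - b = 3 * w := ⟨(a - b) / 3, by omega⟩
  refine ⟨x, b - 2 * x + w, w, ?_⟩
  obtain rfl : a = b + 3 * w := by linarith
  obtain rfl : c = 6 * x - 2 * b - 3 * w := by linarith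
  linarith

lemma ternary_form (n : ℕ) (hn : n % 2 = 1 ∨ n % 4 = 2 ∧ n % 16 ≠ 10) :
    ∃ x z w : ℤ, (n : ℤ) = 2 * x ^ 2 + (z ^ 2 + z * w + w ^ 2) := by
  apply exists_form_of_six_mul
  rcases hn with h | ⟨h, h'⟩
  · obtain ⟨u, v, w, huvw⟩ := sum_three_sq_two_mod_four (6 * n) (by omega)
    exact ⟨u, v, w, by rw [← huvw]; push_cast; ring⟩
  · obtain ⟨u, v, w, huvw⟩ := sum_three_sq_odd (3 * (n / 2)) (by omega)
    refine ⟨2 * u, 2 * v, 2 * w, ?_⟩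
    have : (n : ℤ) = 2 * ((n / 2 : ℕ) : ℤ) := by omega
    push_cast at huvw this
    linarith

/-! ### The quaternary forms -/

lemma quaternary_of_ternary (b n m : ℕ) (y : ℤ) (hnm : (n : ℤ) = m + b * y ^ 2)
    (h : ∃ x z w : ℤ, (m : ℤ) = 2 * x ^ 2 + (z ^ 2 + z * w + w ^ 2)) :
    ∃ x y z w : ℤ, (n : ℤ) = 2 * x ^ 2 + b * y ^ 2 + (z ^ 2 + z * w + w ^ 2) := by
  obtain ⟨x, z, w, h⟩ := h
  exact ⟨x, y, z, w, by rw [hnm, h]; ring⟩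

lemma ternary_four_mul (m : ℕ) (hm : m % 2 = 1) :
    ∃ x z w : ℤ, ((4 * m : ℕ) : ℤ) = 2 * x ^ 2 + (z ^ 2 + z * w + w ^ 2) := by
  obtain ⟨x, z, w, h⟩ := ternary_form m (Or.inl hm)
  exact ⟨2 * x, 2 * z, 2 * w, by push_cast; rw [h]; ring⟩

lemma quaternary_universal (b : ℕ) (hb : 2 ≤ b) (hb' : b ≤ 10) (n : ℕ) :
    ∃ x y z w : ℤ, (n : ℤ) = 2 * x ^ 2 + b * y ^ 2 + (z ^ 2 + z * w + w ^ 2) := by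
  induction n using Nat.strong_induction_on with
  | _ n ih =>
  by_cases h0 : n = 0
  · exact ⟨0, 0, 0, 0, by simp [h0]⟩
  by_cases h4 : n % 4 = 0
  · obtain ⟨x, y, z, w, h⟩ := ih (n / 4) (by omega)
    refine ⟨2 * x, 2 * y, 2 * z, 2 * w, ?_⟩
    have : (n : ℤ) = 4 * ((n / 4 : ℕ) : ℤ) := by omega
    rw [this, h]; ring
  by_cases h10 : n % 16 = 10
  · -- `b y²` is subtracted for `y = 1` or `y = 2` so as to leave the class `10` modulo `16`
    have one : ((n - b) % 2 = 1 ∨ (n - b) % 4 = 2 ∧ (n - b) % 16 ≠ 10) →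
        ∃ x y z w : ℤ, (n : ℤ) = 2 * x ^ 2 + b * y ^ 2 + (z ^ 2 + z * w + w ^ 2) := fun h =>
      quaternary_of_ternary b n (n - b) 1 (by push_cast [show b ≤ n by omega]; ring)
        (ternary_form _ h)
    have two (hle : 4 * b ≤ n) : ((n - 4 * b) % 4 = 2 ∧ (n - 4 * b) % 16 ≠ 10) →
        ∃ x y z w : ℤ, (n : ℤ) = 2 * x ^ 2 + b * y ^ 2 + (z ^ 2 + z * w + w ^ 2) := fun h =>
      quaternary_of_ternary b n (n - 4 * b) 2 (by push_cast [hle]; ring)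
        (ternary_form _ (Or.inr h))
    by_cases hb2 : b = 2
    · exact two (by omega) (by omega)
    by_cases hb6 : b = 6
    · -- `n - 6` is four times an odd number
      exact quaternary_of_ternary b n (4 * ((n - 6) / 4)) 1 (by omega)
        (ternary_four_mul _ (by omega))
    by_cases hb10 : b = 10
    · by_cases hn10 : n = 10
      · exact ⟨0, 1, 0, 0, by simp [hn10, hb10]⟩
      by_cases hn26 : n = 26
      · exact ⟨0, 1, 4, 0, by simp [hn26, hb10]⟩
      exact two (by omega) (by omega)
    exact one (by omega)
  · exact quaternary_of_ternary b n n 0 (by ring) (ternary_form n (by omega))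

/-- The number `10` is missed by `2x² + z² + zw + w²`. -/
lemma ten_not_ternary (x z w : ℤ) : 10 ≠ 2 * x ^ 2 + (z ^ 2 + z * w + w ^ 2) := by
  intro h
  have hx : x ^ 2 ≤ 5 := by nlinarith [sq_nonneg (z + w), sq_nonneg z, sq_nonneg w]
  have hz : z ^ 2 ≤ 13 := by nlinarith [sq_nonneg (z + 2 * w), sq_nonneg x]
  have hw : w ^ 2 ≤ 13 := by nlinarith [sq_nonneg (w + 2 * z), sq_nonneg x]
  have hx1 : x ≤ 2 := by nlinarith
  have hx2 : -2 ≤ x := by nlinarith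
  have hz1 : z ≤ 3 := by nlinarith
  have hz2 : -3 ≤ z := by nlinarith
  have hw1 : w ≤ 3 := by nlinarith
  have hw2 : -3 ≤ w := by nlinarith
  interval_cases x <;> interval_cases z <;> interval_cases w <;> omega

theorem stmt_6 (b : ℕ) (hb : 2 ≤ b) :
    (∀ n : ℕ, ∃ x y z w : ℤ,
      (n : ℤ) = 2 * x ^ 2 + b * y ^ 2 + (z ^ 2 + z * w + w ^ 2)) ↔
    b ∈ ({2, 3, 4, 5, 6, 7, 8, 9, 10} : Set ℕ) := by
  constructor
  · intro h
    obtain ⟨x, y, z, w, h⟩ := h 10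
    have hb10 : b ≤ 10 := by
      by_contra hcon
      have hy : y = 0 := by
        by_contra hy
        have h1 : 1 ≤ y ^ 2 := Int.add_one_le_of_lt (sq_pos_of_ne_zero hy)
        have h2 : (11 : ℤ) ≤ b := by omega
        push_cast at h
        nlinarith [sq_nonneg (z + w), sq_nonneg z, sq_nonneg w, sq_nonneg x]
      subst hy
      exact ten_not_ternary x z w (by push_cast at h; linarith)
    simp only [Set.mem_insert_iff, Set.mem_singleton_iff]
    omega
  · intro h
    simp only [Set.mem_insert_iff, Set.mem_singleton_iff] at h
    exact quaternary_universal b hb (by omega)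
end

section
/- There exist no positive integers a, c such that the ternary form f^a_c(x,y,z) = a·x² + c·(y² + y·z + z²) represents every natural number; that is, for all positive integers a and c there is some positive integer n which cannot be written as a·x² + c·(y² + y·z + z²) with x, y, z ∈ ℤ. -/
/-!
Write `L = y² + yz + z²`. Such values are nonnegative and never congruent to `2` mod `3` or
mod `4`, so `L ∉ {2, 5, 6, 8, 10}`. Representing `1` forces `a = 1` or `c = 1`, and representing
`2` then leaves only `(a, c) = (1, 1), (2, 1), (1, 2)`. These three forms miss `6`, `10` and `5`
respectively.
-/

lemma loeschian_restrict (y z : ℤ) :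
    0 ≤ y ^ 2 + y * z + z ^ 2 ∧ (y ^ 2 + y * z + z ^ 2) % 3 ≠ 2 ∧
      (y ^ 2 + y * z + z ^ 2) % 4 ≠ 2 := by
  refine ⟨by nlinarith [sq_nonneg (y + z), sq_nonneg y, sq_nonneg z], ?_, ?_⟩
  · have hy : y % 3 = 0 ∨ y % 3 = 1 ∨ y % 3 = 2 := by omega
    have hz : z % 3 = 0 ∨ z % 3 = 1 ∨ z % 3 = 2 := by omega
    rcases hy with h | h | h <;> rcases hz with k | k | k <;>
      simp [pow_two, Int.add_emod, Int.mul_emod, h, k]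
  · have hy : y % 4 = 0 ∨ y % 4 = 1 ∨ y % 4 = 2 ∨ y % 4 = 3 := by omega
    have hz : z % 4 = 0 ∨ z % 4 = 1 ∨ z % 4 = 2 ∨ z % 4 = 3 := by omega
    rcases hy with h | h | h | h <;> rcases hz with k | k | k | k <;>
      simp [pow_two, Int.add_emod, Int.mul_emod, h, k]

/-- A square is `0`, `1`, `4`, `9` or at least `16`; this reduces the small cases to linear
arithmetic. -/
lemma sq_small_cases (x : ℤ) :
    x ^ 2 = 0 ∨ x ^ 2 = 1 ∨ x ^ 2 = 4 ∨ x ^ 2 = 9 ∨ 16 ≤ x ^ 2 := by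
  by_cases h : -4 < x ∧ x < 4
  · obtain ⟨h1, h2⟩ := h
    interval_cases x <;> simp
  · have : x ≤ -4 ∨ 4 ≤ x := by omega
    rcases this with h | h
    · right; right; right; right; nlinarith
    · right; right; right; right; nlinarith

theorem stmt_8 (a c : ℕ) (ha : 0 < a) (hc : 0 < c) :
    ∃ n : ℕ, 0 < n ∧ ¬ ∃ x y z : ℤ,
      (n : ℤ) = a * x ^ 2 + c * (y ^ 2 + y * z + z ^ 2) := by
  by_contra! H
  obtain ⟨x, y, z, h1⟩ := H 1 (by norm_num)
  obtain ⟨u, v, w, h2⟩ := H 2 (by norm_num)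
  have key : (a = 1 ∧ c = 1) ∨ (a = 2 ∧ c = 1) ∨ (a = 1 ∧ c = 2) := by
    obtain ⟨p, -, -⟩ := loeschian_restrict y z
    obtain ⟨q, q3, -⟩ := loeschian_restrict v w
    have hx := sq_small_cases x
    have hu := sq_small_cases u
    generalize y ^ 2 + y * z + z ^ 2 = L at *
    generalize v ^ 2 + v * w + w ^ 2 = M at *
    generalize x ^ 2 = X at *
    generalize u ^ 2 = U at *
    have hX : 0 ≤ X := by omega
    have hU : 0 ≤ U := by omega
    have ha' : (1 : ℤ) ≤ a := by exact_mod_cast ha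
    have hc' : (1 : ℤ) ≤ c := by exact_mod_cast hc
    push_cast at h1 h2
    have hX1 : X ≤ 1 := by nlinarith [mul_nonneg (by omega : (0 : ℤ) ≤ c) p]
    have hL1 : L ≤ 1 := by nlinarith [mul_nonneg (by omega : (0 : ℤ) ≤ a) hX]
    have hU2 : U ≤ 2 := by nlinarith [mul_nonneg (by omega : (0 : ℤ) ≤ c) q]
    have hM2 : M ≤ 2 := by nlinarith [mul_nonneg (by omega : (0 : ℤ) ≤ a) hU]
    have hU1 : U ≤ 1 := by omega
    have hM1 : M ≤ 1 := by omega
    interval_cases X <;> interval_cases L <;> interval_cases U <;> interval_cases M <;> omega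
  rcases key with ⟨rfl, rfl⟩ | ⟨rfl, rfl⟩ | ⟨rfl, rfl⟩
  · obtain ⟨x, y, z, h⟩ := H 6 (by norm_num)
    have hL := loeschian_restrict y z
    have hx := sq_small_cases x
    push_cast at h
    omega
  · obtain ⟨x, y, z, h⟩ := H 10 (by norm_num)
    have hL := loeschian_restrict y z
    have hx := sq_small_cases x
    push_cast at h
    omega
  · obtain ⟨x, y, z, h⟩ := H 5 (by norm_num)
    have hL := loeschian_restrict y z
    have hx := sq_small_cases x
    push_cast at h
    omega
end

section
/- Let a, b be positive integers with a ≤ b. The quadratic form f^{a,b}_2(x,y,z,w) = a·x² + b·y² + 2·(z² + z·w + w²) represents every nonnegative integer (with x, y, z, w ∈ ℤ) if and only if a = 1 and b ∈ {1, 2, 3, 4, 5}. -/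
/-! The heart of the matter is the ternary form `x² + 2(z² + zw + w²)`, which represents every
positive `n` not of the shape `4^k(8m + 5)`. Granting this, for `b ≤ 5` a suitable choice of
`y ∈ {0, 1, 2}` moves an `n` not divisible by `4` out of the bad class `5 mod 8`, and factors `4` are
absorbed by scaling all variables by `2`. Conversely, representing `1` forces `a = 1`, and
representing `5` forces `b ≤ 5`, because `z² + zw + w²` is never `2`.

The ternary theorem is proved along the lines of Dirichlet's proof of the three-square theorem.

* Dirichlet's theorem on primes in progressions and quadratic reciprocity give `d > 0` such that
  `-d` is a square `t²` modulo `m = dn - 3` (`exists_residue`). With `am = t² + d`, the symmetric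
  matrix with rows `(a, t, 1), (t, m, 0), (1, 0, n)` is positive definite of determinant `3`, and
  its form represents `n`.
* Every positive definite integral ternary form of determinant `3` is equivalent to `x² + y² + 3z²`
  or to `x² + 2(y² + yz + z²)` (`reduction`). The two are told apart modulo `3`: only the second has
  an isotropic vector modulo `3` outside the radical. The choice of `d` ensures that the constructed
  form has one. -/

open NumberTheorySymbols

/-! ### Reduction of ternary forms of determinant three -/

/-- The ternary quadratic form with Gram matrix of rows `(a, t, s), (t, b, r), (s, r, c)`. -/
def ternaryForm (a b c r s t x y z : ℤ) : ℤ :=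
  a * x ^ 2 + b * y ^ 2 + c * z ^ 2 + 2 * r * (y * z) + 2 * s * (x * z) + 2 * t * (x * y)

/-- The bilinear form with Gram matrix of rows `(a, t, s), (t, b, r), (s, r, c)`. -/
def ternaryBilin (a b c r s t x y z x' y' z' : ℤ) : ℤ :=
  a * (x * x') + b * (y * y') + c * (z * z') + r * (y * z' + z * y') + s * (x * z' + z * x') +
    t * (x * y' + y * x')

/-- The form with Gram matrix of rows `(a, t, s), (t, b, r), (s, r, c)` is positive definite of
determinant `3`, represents `n`, and has an isotropic vector modulo `3` that is not in the radical
modulo `3`. All of this is invariant under unimodular substitutions. -/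
def Admissible (n a b c r s t : ℤ) : Prop :=
  0 < a ∧ 0 < a * b - t ^ 2 ∧
  a * b * c + 2 * r * s * t - a * r ^ 2 - b * s ^ 2 - c * t ^ 2 = 3 ∧
  (∃ x y z, ternaryForm a b c r s t x y z = n) ∧
  ∃ x y z x' y' z', (3 : ℤ) ∣ ternaryForm a b c r s t x y z ∧
    ¬ (3 : ℤ) ∣ ternaryBilin a b c r s t x y z x' y' z'

namespace Admissible

variable {n a b c r s t : ℤ}

/-- Interchange of the first two variables. -/
lemma swap_xy (h : Admissible n a b c r s t) : Admissible n b a c s r t := by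
  obtain ⟨ha, hm, hd, ⟨x, y, z, hn⟩, x₁, y₁, z₁, x₂, y₂, z₂, h1, h2⟩ := h
  have hb : 0 < b := by
    by_contra hb
    nlinarith [sq_nonneg t]
  refine ⟨hb, by linarith, by linarith, ⟨y, x, z, ?_⟩, y₁, x₁, z₁, y₂, x₂, z₂, ?_, ?_⟩
  · rw [← hn]; unfold ternaryForm; ring
  · convert h1 using 1; unfold ternaryForm; ring
  · convert h2 using 2; unfold ternaryBilin; ring

/-- The identity behind the reduction: completing the square in a ternary form leaves the binary
form with coefficients `ab - t², ar - ts, ac - s²`, of determinant `a` times the original one. -/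
lemma minor_identity (h : Admissible n a b c r s t) :
    (a * b - t ^ 2) * (a * c - s ^ 2) - (a * r - t * s) ^ 2 = 3 * a := by
  obtain ⟨-, -, hd, -⟩ := h
  linear_combination a * hd

/-- Interchange of the last two variables. -/
lemma swap_yz (h : Admissible n a b c r s t) : Admissible n a c b r t s := by
  have hi := h.minor_identity
  obtain ⟨ha, hm, hd, ⟨x, y, z, hn⟩, x₁, y₁, z₁, x₂, y₂, z₂, h1, h2⟩ := h
  have hc : 0 < a * c - s ^ 2 := by
    by_contra hc
    nlinarith [sq_nonneg (a * r - t * s)]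
  refine ⟨ha, hc, by linarith, ⟨x, z, y, ?_⟩, x₁, z₁, y₁, x₂, z₂, y₂, ?_, ?_⟩
  · rw [← hn]; unfold ternaryForm; ring
  · convert h1 using 1; unfold ternaryForm; ring
  · convert h2 using 2; unfold ternaryBilin; ring

/-- The substitution `x ↦ x + k y`. -/
lemma shift_xy (h : Admissible n a b c r s t) (k : ℤ) :
    Admissible n a (b + 2 * k * t + k ^ 2 * a) c (r + k * s) s (t + k * a) := by
  obtain ⟨ha, hm, hd, ⟨x, y, z, hn⟩, x₁, y₁, z₁, x₂, y₂, z₂, h1, h2⟩ := h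
  refine ⟨ha, by linarith, by linarith, ⟨x - k * y, y, z, ?_⟩,
    x₁ - k * y₁, y₁, z₁, x₂ - k * y₂, y₂, z₂, ?_, ?_⟩
  · rw [← hn]; unfold ternaryForm; ring
  · convert h1 using 1; unfold ternaryForm; ring
  · convert h2 using 2; unfold ternaryBilin; ring

/-- The substitution `x ↦ x + k z`. -/
lemma shift_xz (h : Admissible n a b c r s t) (k : ℤ) :
    Admissible n a b (c + 2 * k * s + k ^ 2 * a) (r + k * t) (s + k * a) t := by
  simpa using (h.swap_yz.shift_xy k).swap_yz

/-- The substitution `y ↦ y + k z`. -/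
lemma shift_yz (h : Admissible n a b c r s t) (k : ℤ) :
    Admissible n a b (c + 2 * k * r + k ^ 2 * b) (r + k * b) (s + k * t) t := by
  simpa using (h.swap_xy.shift_xz k).swap_xy

end Admissible

lemma exists_small_residue (u v : ℤ) (hv : 0 < v) :
    ∃ k : ℤ, 2 * (u + k * v) ≤ v ∧ -v ≤ 2 * (u + k * v) := by
  refine ⟨-((2 * u + v) / (2 * v)), ?_⟩
  have h1 := Int.emod_add_mul_ediv (2 * u + v) (2 * v)
  have h2 := Int.emod_nonneg (2 * u + v) (show 2 * v ≠ 0 by omega)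
  have h3 := Int.emod_lt_of_pos (2 * u + v) (show 0 < 2 * v by omega)
  constructor <;> nlinarith

/-- A form for which `a` is least, and `ab - t²` is least given `a`, is up to shifts
`x² + y² + 3z²` or `x² + 2(y² ± yz + z²)`; every isotropic vector modulo `3` of the former lies in
the radical. The proof is by induction on `a`, then on `ab - t²`. -/
theorem reduction {n a b c r s t : ℤ} (h : Admissible n a b c r s t) :
    ∃ x z w : ℤ, n = x ^ 2 + 2 * (z ^ 2 + z * w + w ^ 2) := by
  induction hA : a.toNat using Nat.strong_induction_on generalizing a b c r s t with
  | _ A ihA =>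
  induction hB : (a * b - t ^ 2).toNat using Nat.strong_induction_on generalizing b c r s t with
  | _ B ihB =>
  -- For small `t` and `ar - ts`, minimality gives `3a² ≤ 4(ab - t²)` and `(ab - t²)² ≤ 4a`,
  -- hence `a = 1`.
  have key : ∀ b' c' r' s' t' : ℤ, Admissible n a b' c' r' s' t' →
      a * b' - t' ^ 2 = a * b - t ^ 2 → 2 * t' ≤ a → -a ≤ 2 * t' →
      2 * (a * r' - t' * s') ≤ a * b - t ^ 2 → -(a * b - t ^ 2) ≤ 2 * (a * r' - t' * s') →
      ∃ x z w : ℤ, n = x ^ 2 + 2 * (z ^ 2 + z * w + w ^ 2) := by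
    intro b' c' r' s' t' h' hβ ht1 ht2 hr1 hr2
    by_cases hab : b' < a
    · have hb' := h'.swap_xy.1
      exact ihA b'.toNat (by omega) h'.swap_xy rfl
    by_cases hβγ : a * c' - s' ^ 2 < a * b - t ^ 2
    · have hc' := h'.swap_yz.2.1
      exact ihB _ (by omega) h'.swap_yz rfl
    push Not at hab hβγ
    have hi := h'.minor_identity
    have ha := h'.1
    have hm := h'.2.1
    rw [hβ] at hi hm
    set β := a * b - t ^ 2 with hβdef
    set ρ := a * r' - t' * s' with hρ
    have hρ2 : 4 * ρ ^ 2 ≤ β ^ 2 := by nlinarith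
    have ht2' : 4 * t' ^ 2 ≤ a ^ 2 := by nlinarith
    have hβa : 3 * a ^ 2 ≤ 4 * β := by nlinarith
    have hβ2 : β ^ 2 ≤ 4 * a := by nlinarith
    have ha1 : a = 1 := by
      by_contra hne
      have ha2 : 2 ≤ a := by omega
      have h3 : 3 * β ≥ 4 * a + 1 ∨ 3 * β ≤ 4 * a := by omega
      have : 3 ≤ β := by nlinarith
      nlinarith
    subst ha1
    have ht0 : t' = 0 := by omega
    subst ht0
    have h'' := h'.shift_xz (-s')
    generalize c' + 2 * (-s') * s' + (-s') ^ 2 * 1 = c'' at h''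
    simp only [mul_zero, add_zero, mul_one, add_neg_cancel] at h''
    have hβ3 : β ≤ 2 := by nlinarith
    have hb2 : b' = 1 ∨ b' = 2 := by
      have : b' = β := by linarith
      omega
    obtain ⟨-, -, hd, ⟨x, y, z, hn⟩, x₁, y₁, z₁, x₂, y₂, z₂, h1, h2⟩ := h''
    unfold ternaryForm at hn h1
    unfold ternaryBilin at h2
    rcases hb2 with rfl | rfl
    · have hr0 : r' = 0 := by omega
      subst hr0
      have hc3 : c'' = 3 := by linarith
      subst hc3
      exfalso
      have h1' : (3 : ℤ) ∣ x₁ ^ 2 + y₁ ^ 2 := by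
        have : x₁ ^ 2 + y₁ ^ 2 = (1 * x₁ ^ 2 + 1 * y₁ ^ 2 + 3 * z₁ ^ 2 + 2 * 0 * (y₁ * z₁) +
          2 * 0 * (x₁ * z₁) + 2 * 0 * (x₁ * y₁)) - 3 * z₁ ^ 2 := by ring
        rw [this]
        exact dvd_sub h1 (Dvd.intro _ rfl)
      have hxy : (3 : ℤ) ∣ x₁ ∧ (3 : ℤ) ∣ y₁ := by
        have hx : x₁ % 3 = 0 ∨ x₁ % 3 = 1 ∨ x₁ % 3 = 2 := by omega
        have hy : y₁ % 3 = 0 ∨ y₁ % 3 = 1 ∨ y₁ % 3 = 2 := by omega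
        have h0 := Int.emod_eq_zero_of_dvd h1'
        rcases hx with hx | hx | hx <;> rcases hy with hy | hy | hy <;>
          simp [pow_two, Int.add_emod, Int.mul_emod, hx, hy] at h0
        omega
      obtain ⟨⟨u, rfl⟩, ⟨v, rfl⟩⟩ := hxy
      exact h2 ⟨u * x₂ + v * y₂ + z₁ * z₂, by ring⟩
    · have hr0 : r' = 1 ∨ r' = 0 ∨ r' = -1 := by omega
      rcases hr0 with rfl | rfl | rfl
      · have hc3 : c'' = 2 := by linarith
        subst hc3
        exact ⟨x, y, z, by rw [← hn]; ring⟩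
      · omega
      · have hc3 : c'' = 2 := by linarith
        subst hc3
        exact ⟨x, y, -z, by rw [← hn]; ring⟩
  obtain ⟨k, hk1, hk2⟩ := exists_small_residue t a h.1
  have h1 := h.shift_xy k
  obtain ⟨l, hl1, hl2⟩ := exists_small_residue
    (a * (r + k * s) - (t + k * a) * s) (a * b - t ^ 2) h.2.1
  refine key _ _ _ _ _ (h1.shift_yz l) (by ring) hk1 hk2 ?_ ?_
  · refine le_of_eq_of_le ?_ hl1; ring
  · refine le_of_le_of_eq hl2 ?_; ring

/-! ### Quadratic residues and primes in progressions -/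

lemma jacobi_neg_left (d p : ℕ) : J(-(d : ℤ) | p) = J(-1 | p) * J(d | p) := by
  rw [← jacobiSym.mul_left, neg_one_mul]

/-- Reciprocity for `-d` modulo `p`, in the three situations that occur below. -/
lemma jacobi_neg_eq_one {d p : ℕ} (h : d % 4 = 1 ∧ p % 4 = 3 ∧ J(p | d) = -1 ∨
    d % 4 = 1 ∧ p % 4 = 1 ∧ J(p | d) = 1 ∨ d % 4 = 3 ∧ p % 2 = 1 ∧ J(p | d) = 1) :
    J(-(d : ℤ) | p) = 1 := by
  have hp : Odd p := by rw [Nat.odd_iff]; omega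
  rw [jacobi_neg_left, jacobiSym.at_neg_one hp]
  rcases h with ⟨h1, h2, h3⟩ | ⟨h1, h2, h3⟩ | ⟨h1, h2, h3⟩
  · rw [ZMod.χ₄_nat_three_mod_four h2, jacobiSym.quadratic_reciprocity_one_mod_four h1 hp, h3]
    rfl
  · rw [ZMod.χ₄_nat_one_mod_four h2, jacobiSym.quadratic_reciprocity_one_mod_four h1 hp, h3]
    rfl
  · have : p % 4 = 1 ∨ p % 4 = 3 := by omega
    rcases this with h4 | h4
    · have hd : Odd d := by rw [Nat.odd_iff]; omega
      rw [ZMod.χ₄_nat_one_mod_four h4, jacobiSym.quadratic_reciprocity_one_mod_four' hd h4, h3]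
      rfl
    · rw [ZMod.χ₄_nat_three_mod_four h4, jacobiSym.quadratic_reciprocity_three_mod_four h1 h4, h3]
      rfl

/-- Dirichlet's theorem in the form needed: `d` in a prescribed class modulo `24` for which
`(dn - e)/g` is prime. Here `A` and `M` stand for `(rn - e)/g` and `24n/g`. -/
lemma exists_prime_step (n r e g A M : ℕ) (hM0 : M ≠ 0) (hA : g * A + e = r * n)
    (hM : g * M = 24 * n) (hcop : A.Coprime M) :
    ∃ d p : ℕ, p.Prime ∧ d % 24 = r % 24 ∧ g * p + e = d * n ∧ ∃ k, p = A + M * k := by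
  obtain ⟨p, hpA, hp, hmod⟩ := Nat.forall_exists_prime_gt_and_modEq A hM0 hcop
  obtain ⟨k, hk⟩ := (Nat.modEq_iff_dvd' hpA.le).1 hmod.symm
  have hpk : p = A + M * k := by omega
  refine ⟨r + 24 * k, p, hp, by omega, ?_, k, hpk⟩
  rw [hpk]
  linear_combination hA + k * hM

/-- The square root `t` of `-d` modulo `p` is taken congruent to `3` modulo `6`, so that it also
serves modulo `2` and, when `3 ∣ d`, modulo `3`. -/
lemma exists_sqrt {d p : ℕ} (hp : p.Prime) (h2 : p ≠ 2) (h3 : p ≠ 3)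
    (hJ : J(-(d : ℤ) | p) = 1) : ∃ t : ℤ, (p : ℤ) ∣ t ^ 2 + d ∧ t % 6 = 3 := by
  have : Fact p.Prime := ⟨hp⟩
  obtain ⟨u, hu⟩ := ZMod.isSquare_of_jacobiSym_eq_one hJ
  have hcop : p.Coprime 6 := by
    rw [show 6 = 2 * 3 from rfl, Nat.coprime_mul_iff_right]
    exact ⟨(Nat.coprime_primes hp Nat.prime_two).2 h2, (Nat.coprime_primes hp Nat.prime_three).2 h3⟩
  obtain ⟨t, ht1, ht2⟩ := Nat.chineseRemainder hcop u.val 3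
  refine ⟨t, ?_, ?_⟩
  · rw [← ZMod.intCast_zmod_eq_zero_iff_dvd]
    have h1 : (t : ZMod p) = u := by
      rw [(ZMod.natCast_eq_natCast_iff _ _ _).2 ht1, ZMod.natCast_zmod_val]
    push_cast at hu ⊢
    rw [h1, pow_two, ← hu]
    ring
  · unfold Nat.ModEq at ht2
    omega

/-- Coprimality is checked on prime divisors: a common prime of `rn - e` and `24n` divides
`6` or `e`. -/
lemma coprime_aux {n r e g A M : ℕ} (hA : g * A + e = r * n) (hM : g * M = 24 * n)
    (he : e = 1 ∨ e = 3) (h2 : A % 2 = 1) (h3 : A % 3 ≠ 0) : A.Coprime M := by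
  refine Nat.coprime_of_dvd fun q hq hqA hqM => ?_
  have h24 : q ∣ 24 * n := hM ▸ Dvd.dvd.mul_left hqM g
  have hq2 : q ≠ 2 := by rintro rfl; omega
  have hq3 : q ≠ 3 := by rintro rfl; omega
  have hn : q ∣ n := by
    refine (Nat.Coprime.dvd_mul_left ?_).1 h24
    rw [show 24 = 2 ^ 3 * 3 from rfl, Nat.coprime_mul_iff_right]
    exact ⟨((Nat.coprime_primes hq Nat.prime_two).2 hq2).pow_right 3,
      (Nat.coprime_primes hq Nat.prime_three).2 hq3⟩
  have hqe : q ∣ e := (Nat.dvd_add_right (hqA.mul_left g)).1 (hA ▸ hn.mul_left r)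
  rcases he with rfl | rfl
  · exact hq.one_lt.ne' (Nat.dvd_one.1 hqe)
  · exact hq3 ((Nat.prime_dvd_prime_iff_eq hq Nat.prime_three).1 hqe)

lemma jacobi_of_eq {d p n e g : ℕ} (h : g * p + e = d * n) :
    J(g | d) * J(p | d) = J(-(e : ℤ) | d) := by
  rw [← jacobiSym.mul_left]
  apply jacobiSym.mod_left'
  have : (g * p : ℤ) = -e + d * n := by
    have : (g * p + e : ℤ) = d * n := by exact_mod_cast h
    linarith
  rw [this, Int.add_mul_emod_self_left]

/-- For `n` outside the classes `0 mod 4` and `5 mod 8`, some `d > 0` makes `-d` a square modulo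
`m = dn - 3`. The last condition provides the isotropic vector modulo `3`. -/
lemma exists_residue (n : ℕ) (h : n % 4 = 2 ∨ n % 8 = 1 ∨ n % 4 = 3) :
    ∃ d m t a : ℤ, 0 < d ∧ 0 < m ∧ m + 3 = d * n ∧ a * m = t ^ 2 + d ∧
      ((n : ℤ) % 3 = 0 ∨ d % 3 = 2) := by
  by_cases hn3 : n % 3 = 0
  · -- write `n = 3n'`; then `m = 3gp` with `gp = dn' - 1` and `3 ∣ d`
    obtain ⟨n', rfl⟩ := Nat.dvd_of_mod_eq_zero hn3
    obtain ⟨d, p, g, hp, hg, hd, heq, hp2, hJ⟩ : ∃ d p g : ℕ, p.Prime ∧ (g = 1 ∨ g = 2) ∧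
        d % 6 = 3 ∧ g * p + 1 = d * n' ∧ p ≠ 2 ∧ J(-(d : ℤ) | p) = 1 := by
      rcases h with h | h | h
      · have hA : 1 * (9 * n' - 1) + 1 = 9 * n' := by omega
        have hM : 1 * (24 * n') = 24 * n' := by omega
        obtain ⟨d, p, hp, hd, heq, k, hk⟩ := exists_prime_step n' 9 1 1 _ _ (by omega) hA hM
          (coprime_aux hA hM (by simp) (by omega) (by omega))
        have hp4 : p % 4 = 1 := by
          have : 24 * n' * k = 4 * (6 * n' * k) := by ring
          omega
        have hJ := jacobi_of_eq heq
        have hdo : Odd d := by rw [Nat.odd_iff]; omega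
        refine ⟨d, p, 1, hp, by simp, by omega, heq, by omega, jacobi_neg_eq_one ?_⟩
        refine Or.inr (Or.inl ⟨by omega, hp4, ?_⟩)
        rw [Nat.cast_one, jacobiSym.one_left, one_mul, jacobiSym.at_neg_one hdo,
          ZMod.χ₄_nat_one_mod_four (by omega)] at hJ
        exact hJ
      · have hA : 2 * ((9 * n' - 1) / 2) + 1 = 9 * n' := by omega
        have hM : 2 * (12 * n') = 24 * n' := by omega
        obtain ⟨d, p, hp, hd, heq, k, hk⟩ := exists_prime_step n' 9 1 2 _ _ (by omega) hA hM
          (coprime_aux hA hM (by simp) (by omega) (by omega))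
        have hp4 : p % 4 = 1 := by
          have : 12 * n' * k = 4 * (3 * n' * k) := by ring
          omega
        have hJ := jacobi_of_eq heq
        have hdo : Odd d := by rw [Nat.odd_iff]; omega
        refine ⟨d, p, 2, hp, by simp, by omega, heq, by omega, jacobi_neg_eq_one ?_⟩
        refine Or.inr (Or.inl ⟨by omega, hp4, ?_⟩)
        rw [Nat.cast_one, jacobiSym.at_neg_one hdo,
          ZMod.χ₄_nat_one_mod_four (by omega), jacobiSym.mod_right _ hdo] at hJ
        norm_num [show d % 8 = 1 by omega] at hJ
        exact hJ
      · have hA : 2 * ((3 * n' - 1) / 2) + 1 = 3 * n' := by omega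
        have hM : 2 * (12 * n') = 24 * n' := by omega
        obtain ⟨d, p, hp, hd, heq, k, hk⟩ := exists_prime_step n' 3 1 2 _ _ (by omega) hA hM
          (coprime_aux hA hM (by simp) (by omega) (by omega))
        have hp4 : p % 2 = 1 := by
          have : 12 * n' * k = 4 * (3 * n' * k) := by ring
          omega
        have hJ := jacobi_of_eq heq
        have hdo : Odd d := by rw [Nat.odd_iff]; omega
        refine ⟨d, p, 2, hp, by simp, by omega, heq, by omega, jacobi_neg_eq_one ?_⟩
        refine Or.inr (Or.inr ⟨by omega, hp4, ?_⟩)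
        rw [Nat.cast_one, jacobiSym.at_neg_one hdo,
          ZMod.χ₄_nat_three_mod_four (by omega), jacobiSym.mod_right _ hdo] at hJ
        norm_num [show d % 8 = 3 by omega] at hJ
        exact hJ
    have hp3 : p ≠ 3 := by
      rintro rfl
      obtain ⟨d', rfl⟩ : 3 ∣ d := by omega
      rw [mul_assoc] at heq
      omega
    obtain ⟨t, ht, ht6⟩ := exists_sqrt hp hp2 hp3 hJ
    have hdvd : ((3 * g * p : ℕ) : ℤ) ∣ t ^ 2 + d := by
      have h6 : (6 : ℤ) ∣ t ^ 2 + d := by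
        obtain ⟨q, rfl⟩ : ∃ q, t = 6 * q + 3 := ⟨t / 6, by omega⟩
        obtain ⟨q', hq'⟩ : ∃ q' : ℤ, (d : ℤ) = 6 * q' + 3 := ⟨d / 6, by omega⟩
        rw [hq']
        exact ⟨6 * q ^ 2 + 6 * q + 2 + q', by ring⟩
      have hc : IsCoprime (6 : ℤ) p := by
        rw [← Nat.cast_ofNat, Nat.isCoprime_iff_coprime, show 6 = 2 * 3 from rfl,
          Nat.coprime_mul_iff_left]
        exact ⟨(Nat.coprime_primes Nat.prime_two hp).2 hp2.symm,
          (Nat.coprime_primes Nat.prime_three hp).2 hp3.symm⟩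
      refine dvd_trans ?_ (hc.mul_dvd h6 ht)
      push_cast
      refine mul_dvd_mul_right ?_ _
      rcases hg with rfl | rfl <;> norm_num
    obtain ⟨a, ha⟩ := hdvd
    refine ⟨d, (3 * g * p : ℕ), t, a, by omega, ?_, ?_, by rw [ha, mul_comm], Or.inl (by omega)⟩
    · have := hp.pos
      rcases hg with rfl | rfl <;> push_cast <;> omega
    · have : (g * p + 1 : ℤ) = d * n' := by exact_mod_cast heq
      push_cast
      linear_combination 3 * this
  · -- here `m = gp` and `d ≡ 2 mod 3`
    obtain ⟨d, p, g, hp, hg, hd, heq, hp2, hJ⟩ : ∃ d p g : ℕ, p.Prime ∧ (g = 1 ∨ g = 2) ∧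
        d % 6 = 5 ∧ g * p + 3 = d * n ∧ p ≠ 2 ∧ J(-(d : ℤ) | p) = 1 := by
      rcases h with h | h | h
      · have hA : 1 * (5 * n - 3) + 3 = 5 * n := by omega
        have hM : 1 * (24 * n) = 24 * n := by omega
        obtain ⟨d, p, hp, hd, heq, k, hk⟩ := exists_prime_step n 5 3 1 _ _ (by omega) hA hM
          (coprime_aux hA hM (by simp) (by omega) (by omega))
        have hp4 : p % 4 = 3 := by
          have : 24 * n * k = 4 * (6 * n * k) := by ring
          omega
        have hJ := jacobi_of_eq heq
        have hdo : Odd d := by rw [Nat.odd_iff]; omega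
        refine ⟨d, p, 1, hp, by simp, by omega, heq, by omega, jacobi_neg_eq_one ?_⟩
        refine Or.inl ⟨by omega, hp4, ?_⟩
        rw [jacobiSym.mod_right (-(3 : ℕ) : ℤ) hdo] at hJ
        norm_num [show d % 12 = 5 by omega] at hJ
        exact hJ
      · have hA : 2 * ((17 * n - 3) / 2) + 3 = 17 * n := by omega
        have hM : 2 * (12 * n) = 24 * n := by omega
        obtain ⟨d, p, hp, hd, heq, k, hk⟩ := exists_prime_step n 17 3 2 _ _ (by omega) hA hM
          (coprime_aux hA hM (by simp) (by omega) (by omega))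
        have hp4 : p % 4 = 3 := by
          have : 12 * n * k = 4 * (3 * n * k) := by ring
          omega
        have hJ := jacobi_of_eq heq
        have hdo : Odd d := by rw [Nat.odd_iff]; omega
        refine ⟨d, p, 2, hp, by simp, by omega, heq, by omega, jacobi_neg_eq_one ?_⟩
        refine Or.inl ⟨by omega, hp4, ?_⟩
        rw [jacobiSym.mod_right (-(3 : ℕ) : ℤ) hdo, jacobiSym.mod_right (2 : ℕ) hdo] at hJ
        norm_num [show d % 12 = 5 by omega, show d % 8 = 1 by omega] at hJ
        exact hJ
      · have hA : 2 * ((11 * n - 3) / 2) + 3 = 11 * n := by omega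
        have hM : 2 * (12 * n) = 24 * n := by omega
        obtain ⟨d, p, hp, hd, heq, k, hk⟩ := exists_prime_step n 11 3 2 _ _ (by omega) hA hM
          (coprime_aux hA hM (by simp) (by omega) (by omega))
        have hp4 : p % 2 = 1 := by
          have : 12 * n * k = 4 * (3 * n * k) := by ring
          omega
        have hJ := jacobi_of_eq heq
        have hdo : Odd d := by rw [Nat.odd_iff]; omega
        refine ⟨d, p, 2, hp, by simp, by omega, heq, by omega, jacobi_neg_eq_one ?_⟩
        refine Or.inr (Or.inr ⟨by omega, hp4, ?_⟩)
        rw [jacobiSym.mod_right (-(3 : ℕ) : ℤ) hdo, jacobiSym.mod_right (2 : ℕ) hdo] at hJ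
        norm_num [show d % 12 = 11 by omega, show d % 8 = 3 by omega] at hJ
        exact hJ
    have hp3 : p ≠ 3 := by
      rintro rfl
      have h3 : 3 ∣ d * n := by omega
      rcases Nat.prime_three.dvd_mul.1 h3 with h3 | h3 <;> omega
    obtain ⟨t, ht, ht6⟩ := exists_sqrt hp hp2 hp3 hJ
    have hdvd : ((g * p : ℕ) : ℤ) ∣ t ^ 2 + d := by
      rcases hg with rfl | rfl
      · simpa using ht
      · have h6 : (2 : ℤ) ∣ t ^ 2 + d := by
          obtain ⟨q, rfl⟩ : ∃ q, t = 6 * q + 3 := ⟨t / 6, by omega⟩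
          obtain ⟨q', hq'⟩ : ∃ q' : ℤ, (d : ℤ) = 6 * q' + 5 := ⟨d / 6, by omega⟩
          rw [hq']
          exact ⟨18 * q ^ 2 + 18 * q + 7 + 3 * q', by ring⟩
        have hc : IsCoprime (2 : ℤ) p := by
          rw [← Nat.cast_ofNat, Nat.isCoprime_iff_coprime]
          exact (Nat.coprime_primes Nat.prime_two hp).2 hp2.symm
        simpa using hc.mul_dvd h6 ht
    obtain ⟨a, ha⟩ := hdvd
    refine ⟨d, (g * p : ℕ), t, a, by omega, ?_, ?_, by rw [ha, mul_comm], Or.inr (by omega)⟩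
    · have := hp.pos
      rcases hg with rfl | rfl <;> push_cast <;> omega
    · exact_mod_cast heq

/-! ### The ternary theorem -/

/-- A binary form of determinant `2` modulo `3` is isotropic and nondegenerate modulo `3`. -/
lemma isotropic_mod_three : ∀ a m t d : ZMod 3, a * m = t ^ 2 + d → d = 2 →
    ∃ x y x' y' : ZMod 3, a * x ^ 2 + m * y ^ 2 + 2 * t * (x * y) = 0 ∧
      a * (x * x') + m * (y * y') + t * (x * y' + y * x') ≠ 0 := by
  decide +revert

theorem ternary_represents (n : ℕ) (h : n % 4 = 2 ∨ n % 8 = 1 ∨ n % 4 = 3) :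
    ∃ x z w : ℤ, (n : ℤ) = x ^ 2 + 2 * (z ^ 2 + z * w + w ^ 2) := by
  obtain ⟨d, m, t, a, hd, hm, hmn, ha, h3⟩ := exists_residue n h
  have ha0 : 0 < a := by
    by_contra ha0
    nlinarith [sq_nonneg t]
  refine reduction (a := a) (b := m) (c := n) (r := 0) (s := 1) (t := t)
    ⟨ha0, by linarith, by linear_combination (n : ℤ) * ha - hmn,
      ⟨0, 0, 1, by unfold ternaryForm; ring⟩, ?_⟩
  unfold ternaryForm ternaryBilin
  rcases h3 with h3 | h3
  · exact ⟨0, 0, 1, 1, 0, 0, by simpa using Int.dvd_of_emod_eq_zero h3, by norm_num⟩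
  · obtain ⟨x, y, x', y', h1, h2⟩ := isotropic_mod_three a m t d (by exact_mod_cast congrArg _ ha)
      (by
        rw [← sub_eq_zero]
        have : ((d - 2 : ℤ) : ZMod 3) = 0 := (ZMod.intCast_zmod_eq_zero_iff_dvd _ 3).2 (by omega)
        exact_mod_cast this)
    refine ⟨x.val, y.val, 0, x'.val, y'.val, 0, ?_, ?_⟩
    · rw [← Nat.cast_ofNat, ← ZMod.intCast_zmod_eq_zero_iff_dvd]
      simpa using h1
    · rw [← Nat.cast_ofNat, ← ZMod.intCast_zmod_eq_zero_iff_dvd]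
      simpa using h2

/-! ### The quaternary forms -/

lemma quaternary_represents (b : ℕ) (hb : 1 ≤ b) (hb5 : b ≤ 5) (n : ℕ) :
    ∃ x y z w : ℤ, (n : ℤ) = x ^ 2 + b * y ^ 2 + 2 * (z ^ 2 + z * w + w ^ 2) := by
  induction n using Nat.strong_induction_on with
  | _ n ih =>
  have of_sub : ∀ (y k : ℕ), n = k + b * y ^ 2 → (k % 4 = 2 ∨ k % 8 = 1 ∨ k % 4 = 3) →
      ∃ x y z w : ℤ, (n : ℤ) = x ^ 2 + b * y ^ 2 + 2 * (z ^ 2 + z * w + w ^ 2) := by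
    intro y k hk hmod
    obtain ⟨x, z, w, h⟩ := ternary_represents k hmod
    refine ⟨x, y, z, w, ?_⟩
    rw [hk]
    push_cast
    rw [h]
    ring
  by_cases h4 : n % 4 = 0
  · by_cases h0 : n = 0
    · exact ⟨0, 0, 0, 0, by simp [h0]⟩
    obtain ⟨x, y, z, w, h⟩ := ih (n / 4) (by omega)
    refine ⟨2 * x, 2 * y, 2 * z, 2 * w, ?_⟩
    have : (n : ℤ) = 4 * ((n / 4 : ℕ) : ℤ) := by omega
    rw [this, h]
    ring
  by_cases h5 : n % 8 = 5
  · -- subtract `b` or `4b`; for `b = 5` the values `n < 20` need an explicit representation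
    obtain rfl | rfl | rfl | rfl | rfl : b = 1 ∨ b = 2 ∨ b = 3 ∨ b = 4 ∨ b = 5 := by omega
    · exact of_sub 2 (n - 4) (by omega) (by omega)
    · exact of_sub 1 (n - 2) (by omega) (by omega)
    · exact of_sub 1 (n - 3) (by omega) (by omega)
    · exact of_sub 1 (n - 4) (by omega) (by omega)
    · by_cases h20 : 20 ≤ n
      · exact of_sub 2 (n - 20) (by omega) (by omega)
      · obtain rfl | rfl : n = 5 ∨ n = 13 := by omega
        · exact ⟨0, 1, 0, 0, by norm_num⟩
        · exact ⟨0, 1, 2, 0, by norm_num⟩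
  · exact of_sub 0 n (by omega) (by omega)

theorem stmt_9 (a b : ℕ) (ha : 0 < a) (hb : 0 < b) (hab : a ≤ b) :
    (∀ n : ℕ, ∃ x y z w : ℤ,
      (n : ℤ) = a * x ^ 2 + b * y ^ 2 + 2 * (z ^ 2 + z * w + w ^ 2)) ↔
    (a = 1 ∧ b ∈ ({1, 2, 3, 4, 5} : Set ℕ)) := by
  constructor
  · intro h
    have hN : ∀ z w : ℤ, 0 ≤ z ^ 2 + z * w + w ^ 2 := fun z w => by
      nlinarith [sq_nonneg (z + w), sq_nonneg z, sq_nonneg w]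
    have ha1 : a = 1 := by
      by_contra hne
      obtain ⟨x, y, z, w, h1⟩ := h 1
      have hx : x = 0 := by
        by_contra hx
        have : 0 < x ^ 2 := by positivity
        have ha2 : (2 : ℤ) ≤ a := by omega
        have hby : 0 ≤ (b : ℤ) * y ^ 2 := by positivity
        push_cast at h1
        nlinarith [hN z w]
      have hy : y = 0 := by
        by_contra hy
        have : 0 < y ^ 2 := by positivity
        have hb2 : (2 : ℤ) ≤ b := by omega
        have hax : 0 ≤ (a : ℤ) * x ^ 2 := by positivity
        push_cast at h1
        nlinarith [hN z w]
      subst hx hy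
      generalize z ^ 2 + z * w + w ^ 2 = N at h1
      simp at h1
      omega
    subst ha1
    refine ⟨rfl, ?_⟩
    suffices b ≤ 5 by
      simp only [Set.mem_insert_iff, Set.mem_singleton_iff]
      omega
    by_contra hb5
    obtain ⟨x, y, z, w, h5⟩ := h 5
    have hy : y = 0 := by
      by_contra hy
      have : 0 < y ^ 2 := by positivity
      have hb2 : (6 : ℤ) ≤ b := by omega
      push_cast at h5
      nlinarith [hN z w, sq_nonneg x]
    subst hy
    have hx : x ^ 2 ≤ 5 := by
      push_cast at h5
      nlinarith [hN z w]
    have hx1 : x ≤ 2 := by nlinarith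
    have hx2 : -2 ≤ x := by nlinarith
    -- parity forces `x = ±1`, leaving `z² + zw + w² = 2`, impossible modulo `4`
    have h2 : z ^ 2 + z * w + w ^ 2 = 2 := by
      generalize z ^ 2 + z * w + w ^ 2 = N at h5
      interval_cases x <;> norm_num at h5 <;> omega
    have hmod : ∀ z w : ZMod 4, z ^ 2 + z * w + w ^ 2 ≠ 2 := by decide
    exact hmod z w (by exact_mod_cast congrArg (Int.cast : ℤ → ZMod 4) h2)
  · rintro ⟨rfl, hb⟩
    simp only [Set.mem_insert_iff, Set.mem_singleton_iff] at hb
    intro n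
    obtain ⟨x, y, z, w, h⟩ := quaternary_represents b (by omega) (by omega) n
    exact ⟨x, y, z, w, by rw [h]; push_cast; ring⟩
end

section
/- A nonnegative integer n can be written as x² + 2·(y² + y·z + z²) with x, y, z ∈ ℤ if and only if n is not of the form 4^k·(8·l + 5) for nonnegative integers k and l. -/
/-! Write `Q(x, y, z) = x² + 2(y² + yz + z²)`.

*Necessity.* `y² + yz + z²` is never `2 mod 4`, so `Q` omits `5 mod 8`; and `4 ∣ Q(x, y, z)` forces
`x, y, z` to be even, so the factor `4 ^ k` can be removed by descent.

*Sufficiency.* Every real point is at `Q`-distance at most `1/4 + 2/3 < 1` from an integral point,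
so the Davenport–Cassels descent applies (`davenport_cassels`): it suffices to represent `n T²` for
some `T ≠ 0`. One may also assume `4 ∤ n`. Let `m` be the odd part of `n`. By Dirichlet's theorem
there is a prime `p > n` with `2p ≡ -1 (mod 3m)` and a prescribed residue mod 8
(`exists_aux_prime`); quadratic reciprocity shows that the residue can be chosen to make `n` a square
mod `p` exactly because `n` is not `5 mod 8`. Then `X² + 2p S² = n T²` has a nontrivial solution: the
congruences `X ≡ S (mod m)`, `X ≡ r T (mod p)` with `r² ≡ n`, and parity conditions cut out a
lattice on which `2pn ∣ X² + 2p S² - n T²`, the pigeonhole principle gives a short nonzero vector in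
it, and for this vector the form equals `0` or `2pn`. In the second case `X² + 2p S² = n (T² + 2p)`
and multiplicativity of `u² + 2p v²` gives a solution (`solve_of_short`). Finally `p ≡ 1 (mod 3)` is
of the form `a² + ab + b²`, so `2p S²` is twice a value of `y² + yz + z²`. -/

/-! ### Necessity -/

lemma even_of_even_norm {y z : ℤ} (h : (y ^ 2 + y * z + z ^ 2) % 2 = 0) :
    y % 2 = 0 ∧ z % 2 = 0 := by
  rcases Int.emod_two_eq_zero_or_one y with hy | hy <;>
  rcases Int.emod_two_eq_zero_or_one z with hz | hz <;>
  simp_all [pow_two, Int.add_emod, Int.mul_emod]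

lemma not_represented (k l : ℕ) : ∀ x y z : ℤ,
    (4 : ℤ) ^ k * (8 * l + 5) ≠ x ^ 2 + 2 * (y ^ 2 + y * z + z ^ 2) := by
  induction k with
  | zero =>
    intro x y z h
    rcases Int.even_or_odd' x with ⟨x, rfl | rfl⟩
    · ring_nf at h
      omega
    · obtain ⟨j, hj⟩ : (2 : ℤ) ∣ x * (x + 1) := (Int.even_mul_succ_self x).two_dvd
      have hx : (2 * x + 1) ^ 2 = 8 * j + 1 := by linear_combination 4 * hj
      rw [hx] at h
      obtain ⟨hy, hz⟩ := even_of_even_norm (y := y) (z := z) (by omega)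
      obtain ⟨y, rfl⟩ := Int.dvd_of_emod_eq_zero hy
      obtain ⟨z, rfl⟩ := Int.dvd_of_emod_eq_zero hz
      ring_nf at h
      omega
  | succ k ih =>
    intro x y z h
    rcases Int.even_or_odd' x with ⟨x, rfl | rfl⟩
    · obtain ⟨hy, hz⟩ := even_of_even_norm (y := y) (z := z) (by
        rw [pow_succ, mul_right_comm] at h
        have : (2 * x) ^ 2 = 4 * x ^ 2 := by ring
        omega)
      obtain ⟨y, rfl⟩ := Int.dvd_of_emod_eq_zero hy
      obtain ⟨z, rfl⟩ := Int.dvd_of_emod_eq_zero hz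
      refine ih x y z ?_
      rw [pow_succ] at h
      linarith
    · rw [pow_succ, mul_right_comm] at h
      have : (2 * x + 1) ^ 2 = 4 * (x ^ 2 + x) + 1 := by ring
      omega

/-! ### The Davenport–Cassels descent -/

/-- The hexagonal lattice has squared covering radius `1/3`: of the three vertices of the fundamental
triangle containing the point, the one with the largest barycentric coordinate works. -/
lemma hexagonal_round (T : ℤ) (hT : 0 < T) (u v : ℤ) :
    ∃ y z : ℤ, 3 * ((u - T * y) ^ 2 + (u - T * y) * (v - T * z) + (v - T * z) ^ 2) ≤ T ^ 2 := by
  -- the corner at the origin, in terms of barycentric coordinates `a, b, c` with `a` largest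
  have key : ∀ a b c : ℤ, 0 ≤ b → 0 ≤ c → b ≤ a → c ≤ a → a + b + c = T →
      3 * (b ^ 2 + b * c + c ^ 2) ≤ T ^ 2 := by
    rintro a b c hb hc hba hca rfl
    nlinarith [mul_nonneg hb hc, mul_nonneg hb (sub_nonneg.2 hba), mul_nonneg hc (sub_nonneg.2 hca),
      mul_nonneg hb (sub_nonneg.2 hca), mul_nonneg hc (sub_nonneg.2 hba),
      mul_nonneg (sub_nonneg.2 hba) (sub_nonneg.2 hca), sq_nonneg (b - c)]
  obtain ⟨i, a, hu, ha0, haT⟩ : ∃ i a : ℤ, u = T * i + a ∧ 0 ≤ a ∧ a < T :=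
    ⟨u / T, u % T, (Int.mul_ediv_add_emod u T).symm, Int.emod_nonneg _ hT.ne', Int.emod_lt_of_pos _ hT⟩
  obtain ⟨j, b, hv, hb0, hbT⟩ : ∃ j b : ℤ, v = T * j + b ∧ 0 ≤ b ∧ b < T :=
    ⟨v / T, v % T, (Int.mul_ediv_add_emod v T).symm, Int.emod_nonneg _ hT.ne', Int.emod_lt_of_pos _ hT⟩
  subst hu hv
  rcases le_total (a + b) T with h | h
  · rcases le_total a (T - a - b) with h1 | h1 <;> rcases le_total b (T - a - b) with h2 | h2 <;>
    rcases le_total a b with h3 | h3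
    case inl.inl.inl | inl.inl.inr =>
      exact ⟨i, j, by linarith [key (T - a - b) a b ha0 hb0 h1 h2 (by ring)]⟩
    case inl.inr.inl | inl.inr.inr | inr.inr.inl =>
      exact ⟨i, j + 1, by linarith [key b a (T - a - b) ha0 (by linarith) (by linarith) h2 (by ring)]⟩
    all_goals
      exact ⟨i + 1, j, by linarith [key a b (T - a - b) hb0 (by linarith) (by linarith) h1 (by ring)]⟩
  · rcases le_total (T - a) (a + b - T) with h1 | h1 <;>
    rcases le_total (T - b) (a + b - T) with h2 | h2 <;>
    rcases le_total a b with h3 | h3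
    case inl.inl.inl | inl.inl.inr =>
      exact ⟨i + 1, j + 1, by
        linarith [key (a + b - T) (T - a) (T - b) (by linarith) (by linarith) h1 h2 (by ring)]⟩
    case inl.inr.inl | inl.inr.inr | inr.inr.inr =>
      exact ⟨i + 1, j, by
        linarith [key (T - b) (T - a) (a + b - T) (by linarith) (by linarith) (by linarith) h2
          (by ring)]⟩
    all_goals
      exact ⟨i, j + 1, by
        linarith [key (T - a) (T - b) (a + b - T) (by linarith) (by linarith) (by linarith) h1
          (by ring)]⟩

lemma round_int (T : ℤ) (hT : 0 < T) (u : ℤ) : ∃ x : ℤ, 4 * (u - T * x) ^ 2 ≤ T ^ 2 := by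
  have h1 := Int.emod_nonneg u hT.ne'
  have h2 := Int.emod_lt_of_pos u hT
  have h3 := Int.mul_ediv_add_emod u T
  rcases le_total (2 * (u % T)) T with h | h
  · refine ⟨u / T, ?_⟩
    have : u - T * (u / T) = u % T := by linarith
    rw [this]
    nlinarith
  · refine ⟨u / T + 1, ?_⟩
    have : u - T * (u / T + 1) = u % T - T := by linarith
    rw [this]
    nlinarith

/-- An integer represented by `Q` over `ℚ` is represented over `ℤ`. The line through a rational point
`v / T` of the quadric `Q = n` and an integral point `w` near it meets the quadric again in a point
with the smaller denominator `T' = T · Q(v / T - w)`. -/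
lemma davenport_cassels (n : ℤ) (T : ℕ) : ∀ (a b c : ℤ), 0 < T →
    n * (T : ℤ) ^ 2 = a ^ 2 + 2 * (b ^ 2 + b * c + c ^ 2) →
    ∃ x y z : ℤ, n = x ^ 2 + 2 * (y ^ 2 + y * z + z ^ 2) := by
  induction T using Nat.strong_induction_on with
  | _ T ih =>
  intro a b c hT h
  have hT' : (0 : ℤ) < T := by exact_mod_cast hT
  obtain ⟨x, hx⟩ := round_int T hT' a
  obtain ⟨y, z, hyz⟩ := hexagonal_round T hT' b c
  -- `B` is the polar form of `Q` at the two points, `q = Q(w)`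
  obtain ⟨B, hB⟩ : ∃ B, B = 2 * a * x + 2 * (2 * b * y + b * z + c * y + 2 * c * z) := ⟨_, rfl⟩
  obtain ⟨q, hq⟩ : ∃ q, q = x ^ 2 + 2 * (y ^ 2 + y * z + z ^ 2) := ⟨_, rfl⟩
  obtain ⟨T', hTT'⟩ : ∃ T' : ℤ, T' = n * T - B + T * q := ⟨_, rfl⟩
  have hdist : T * T' = (a - T * x) ^ 2 +
      2 * ((b - T * y) ^ 2 + (b - T * y) * (c - T * z) + (c - T * z) ^ 2) := by
    rw [hTT', hB, hq]
    linear_combination h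
  have hN : ∀ r s : ℤ, 0 ≤ r ^ 2 + r * s + s ^ 2 := fun r s => by
    nlinarith [sq_nonneg (r + s), sq_nonneg r, sq_nonneg s]
  have hlt : T' < T := by
    have : (T : ℤ) * T' < T * T := by nlinarith
    exact lt_of_mul_lt_mul_left this hT'.le
  have hnn : 0 ≤ T' := by
    have : (0 : ℤ) ≤ T * T' := by
      rw [hdist]
      have := hN (b - T * y) (c - T * z)
      positivity
    exact nonneg_of_mul_nonneg_right this hT'
  rcases hnn.eq_or_lt with h0 | hpos
  · rw [← h0, mul_zero] at hdist
    have e0 := hN (b - T * y) (c - T * z)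
    have e1 : a - T * x = 0 := by
      have : (a - T * x) ^ 2 = 0 := by nlinarith [sq_nonneg (a - T * x)]
      exact pow_eq_zero_iff two_ne_zero |>.1 this
    have e2 : (b - T * y) ^ 2 + (b - T * y) * (c - T * z) + (c - T * z) ^ 2 = 0 := by
      nlinarith [sq_nonneg (a - T * x)]
    have e3 : b - T * y = 0 := by
      have : (b - T * y) ^ 2 = 0 := by
        nlinarith [sq_nonneg (b - T * y), sq_nonneg (b - T * y + 2 * (c - T * z))]
      exact pow_eq_zero_iff two_ne_zero |>.1 this
    have e4 : c - T * z = 0 := by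
      rw [e3] at e2
      exact pow_eq_zero_iff two_ne_zero |>.1 (by linarith)
    refine ⟨x, y, z, ?_⟩
    have ha : a = T * x := by linarith
    have hb : b = T * y := by linarith
    have hc : c = T * z := by linarith
    subst ha hb hc
    have hTsq : (T : ℤ) ^ 2 ≠ 0 := by positivity
    apply mul_right_cancel₀ hTsq
    linear_combination h
  · obtain ⟨t, rfl⟩ := Int.eq_ofNat_of_zero_le hnn
    refine ih t (by exact_mod_cast hlt) ((q - n) * a + (2 * n * T - B) * x)
      ((q - n) * b + (2 * n * T - B) * y) ((q - n) * c + (2 * n * T - B) * z)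
      (by exact_mod_cast hpos) ?_
    have hexp : ((q - n) * a + (2 * n * T - B) * x) ^ 2 +
        2 * (((q - n) * b + (2 * n * T - B) * y) ^ 2 +
          ((q - n) * b + (2 * n * T - B) * y) * ((q - n) * c + (2 * n * T - B) * z) +
          ((q - n) * c + (2 * n * T - B) * z) ^ 2) =
        (q - n) ^ 2 * (n * (T : ℤ) ^ 2) + (q - n) * (2 * n * T - B) * B
          + (2 * n * T - B) ^ 2 * q := by
      rw [h]
      generalize 2 * n * (T : ℤ) - B = β
      linear_combination (-(q - n) * β) * hB - β ^ 2 * hq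
    rw [hexp, hTT']
    ring

/-! ### Short vectors in lattices -/

/-- Minkowski-type pigeonhole: the kernel of a homomorphism from `ℤ³` to a finite group contains a
nonzero vector in any sufficiently large box. -/
lemma exists_short {G : Type*} [AddCommGroup G] [Fintype G] (f : ℤ × ℤ × ℤ →+ G) (a b c : ℕ)
    (h : Fintype.card G ^ 2 < (a + 1) * (b + 1) * (c + 1)) :
    ∃ x y z : ℤ, (x, y, z) ≠ 0 ∧ f (x, y, z) = 0 ∧ x ^ 2 ≤ a ∧ y ^ 2 ≤ b ∧ z ^ 2 ≤ c := by
  classical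
  let box := Finset.Icc (0 : ℤ) a.sqrt ×ˢ Finset.Icc (0 : ℤ) b.sqrt ×ˢ Finset.Icc (0 : ℤ) c.sqrt
  have hcard : (Finset.univ : Finset G).card < box.card := by
    have : box.card = (a.sqrt + 1) * ((b.sqrt + 1) * (c.sqrt + 1)) := by
      simp only [box, Finset.card_product, Int.card_Icc]
      have hto : ∀ m : ℕ, ((m : ℤ) + 1 - 0).toNat = m + 1 := fun m => by omega
      simp only [hto]
    rw [this, Finset.card_univ]
    refine lt_of_pow_lt_pow_left₀ 2 (Nat.zero_le _) (h.trans_le ?_)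
    rw [mul_pow, mul_pow, ← mul_assoc]
    gcongr <;> rw [pow_two] <;> exact Nat.succ_le_succ_sqrt _
  have hsq : ∀ (m : ℕ) (u v : ℤ), 0 ≤ u → u ≤ m.sqrt → 0 ≤ v → v ≤ m.sqrt → (u - v) ^ 2 ≤ m := by
    intro m u v h1 h2 h3 h4
    have : ((m.sqrt : ℤ)) ^ 2 ≤ m := by exact_mod_cast Nat.sqrt_le' m
    refine le_trans (sq_le_sq' ?_ ?_) this <;> linarith
  obtain ⟨⟨x, y, z⟩, hv, ⟨x', y', z'⟩, hv', hne, heq⟩ :=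
    Finset.exists_ne_map_eq_of_card_lt_of_maps_to hcard (f := f) (fun _ _ => Finset.mem_univ _)
  simp only [box, Finset.mem_product, Finset.mem_Icc] at hv hv'
  refine ⟨x - x', y - y', z - z', ?_, ?_, hsq _ _ _ ?_ ?_ ?_ ?_, hsq _ _ _ ?_ ?_ ?_ ?_,
    hsq _ _ _ ?_ ?_ ?_ ?_⟩
  · intro h0
    apply hne
    simp only [Prod.mk_eq_zero, sub_eq_zero] at h0
    simp [h0]
  · have : ((x - x', y - y', z - z') : ℤ × ℤ × ℤ) = (x, y, z) - (x', y', z') := rfl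
    rw [this, map_sub, heq, sub_self]
  all_goals tauto

/-- The homomorphism `(x, y, z) ↦ a x + b y + c z` to `ZMod m`. -/
def linForm (m : ℕ) (a b c : ZMod m) : ℤ × ℤ × ℤ →+ ZMod m where
  toFun v := a * v.1 + b * v.2.1 + c * v.2.2
  map_zero' := by simp
  map_add' u v := by
    simp only [Prod.fst_add, Prod.snd_add, Int.cast_add]
    ring

lemma sq_ne_prime_mul {p : ℕ} (hp : p.Prime) {m : ℕ} (hm : ¬ p ∣ m) (t : ℤ) : t ^ 2 ≠ p * m := by
  intro h
  have hp' : Prime (p : ℤ) := Nat.prime_iff_prime_int.1 hp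
  obtain ⟨s, rfl⟩ := hp'.dvd_of_dvd_pow (Dvd.intro _ h.symm)
  apply hm
  have h0 : (p : ℤ) ≠ 0 := hp'.ne_zero
  have : (m : ℤ) = p * s ^ 2 := by
    apply mul_left_cancel₀ h0
    linear_combination -h
  exact_mod_cast (Dvd.intro _ this.symm : (p : ℤ) ∣ m)

lemma prime_eq_norm {p : ℕ} (hp : p.Prime) (h3 : p % 3 = 1) :
    ∃ a b : ℤ, (p : ℤ) = a ^ 2 + a * b + b ^ 2 := by
  have := Fact.mk hp
  -- a primitive cube root of unity modulo `p`
  obtain ⟨w, hw⟩ : ∃ w : ZMod p, w ^ 2 + w + 1 = 0 := by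
    have : Fact (Nat.Prime 3) := ⟨Nat.prime_three⟩
    obtain ⟨g, hg⟩ := exists_prime_orderOf_dvd_card (G := (ZMod p)ˣ) 3 (by
      rw [ZMod.card_units p]
      omega)
    refine ⟨g, ?_⟩
    have h1 : (g : ZMod p) ≠ 1 := by
      intro h
      rw [Units.val_eq_one] at h
      simp [h] at hg
    have h2 : (g : ZMod p) ^ 3 = 1 := by
      rw [← Units.val_pow_eq_pow_val, ← hg, pow_orderOf_eq_one, Units.val_one]
    have h4 : ((g : ZMod p) - 1) * ((g : ZMod p) ^ 2 + g + 1) = 0 := by linear_combination h2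
    exact (mul_eq_zero.1 h4).resolve_left (sub_ne_zero.2 h1)
  obtain ⟨a, b, c, hne, h0, ha, hb, hc⟩ := exists_short (linForm p 1 (-w) 0) p p 0 (by
    rw [ZMod.card]
    nlinarith)
  have hc0 : c = 0 := pow_eq_zero_iff two_ne_zero |>.1 (le_antisymm (by exact_mod_cast hc) (sq_nonneg c))
  subst hc0
  have hab : (a : ZMod p) = w * b := by
    simp only [linForm, AddMonoidHom.coe_mk, ZeroHom.coe_mk] at h0
    linear_combination h0
  obtain ⟨k, hk⟩ : (p : ℤ) ∣ a ^ 2 + a * b + b ^ 2 := by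
    rw [← ZMod.intCast_zmod_eq_zero_iff_dvd _ p]
    push_cast
    rw [hab]
    linear_combination (b : ZMod p) ^ 2 * hw
  have hsq : ∀ t : ℤ, t ^ 2 ≠ p := fun t => by
    simpa using sq_ne_prime_mul hp (m := 1) (by simpa using hp.one_lt.ne') t
  have ha' := lt_of_le_of_ne ha (hsq a)
  have hb' := lt_of_le_of_ne hb (hsq b)
  have hp0 : (0 : ℤ) < p := by exact_mod_cast hp.pos
  have hk3 : k < 3 := by
    have : (p : ℤ) * k < p * 3 := by nlinarith [sq_nonneg (a - b)]
    exact lt_of_mul_lt_mul_left this hp0.le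
  have hk0 : 0 < k := by
    have : 0 < (p : ℤ) * k := by
      rw [← hk]
      by_contra! hle
      have hb0 : b = 0 := pow_eq_zero_iff two_ne_zero |>.1
        (by nlinarith [sq_nonneg (2 * a + b), sq_nonneg b] : b ^ 2 = 0)
      have ha0 : a = 0 := pow_eq_zero_iff two_ne_zero |>.1
        (by nlinarith [sq_nonneg (2 * b + a), sq_nonneg a] : a ^ 2 = 0)
      simp [ha0, hb0] at hne
    exact pos_of_mul_pos_right this hp0.le
  obtain rfl | rfl : k = 1 ∨ k = 2 := by omega
  · exact ⟨a, b, by linarith⟩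
  · -- a norm is never `2 mod 4`
    exfalso
    obtain ⟨h1, h2⟩ := even_of_even_norm (y := a) (z := b) (by omega)
    obtain ⟨a, rfl⟩ := Int.dvd_of_emod_eq_zero h1
    obtain ⟨b, rfl⟩ := Int.dvd_of_emod_eq_zero h2
    have h5 : (p : ℤ) = 2 * (a ^ 2 + a * b + b ^ 2) := by linarith
    have h6 : (2 : ℤ) ∣ p := ⟨_, h5⟩
    have h7 : 2 ∣ p := by exact_mod_cast h6
    have h8 := (Nat.prime_dvd_prime_iff_eq Nat.prime_two hp).1 h7
    omega

/-! ### Solving `X² + 2p S² = n T²` -/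

/-- If the form takes the value `2pn` instead of `0`, then `X² + 2p S² = n (T² + 2p)`, and multiplying
by `T² + 2p` and composing yields a zero. -/
lemma solve_of_short {n p : ℕ} (hn : 0 < n) (hp : p.Prime) {X S T : ℤ} (hne : (X, S, T) ≠ 0)
    (hdvd : (2 * p * n : ℤ) ∣ X ^ 2 + 2 * p * S ^ 2 - n * T ^ 2)
    (hX : X ^ 2 < 2 * p * n) (hS : S ^ 2 ≤ n) (hT : T ^ 2 < 2 * p) :
    ∃ X S T : ℤ, T ≠ 0 ∧ n * T ^ 2 = X ^ 2 + 2 * p * S ^ 2 := by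
  have hn' : (0 : ℤ) < n := by exact_mod_cast hn
  have hp' : (0 : ℤ) < p := by exact_mod_cast hp.pos
  have hpn : (0 : ℤ) < 2 * p * n := by positivity
  obtain ⟨k, hk⟩ := hdvd
  have hlt : k < 2 := by
    have : (2 * p * n : ℤ) * k < (2 * p * n) * 2 := by
      nlinarith [sq_nonneg T, mul_nonneg hn'.le (sq_nonneg T), mul_le_mul_of_nonneg_left hS hp'.le]
    exact lt_of_mul_lt_mul_left this hpn.le
  have hgt : -1 < k := by
    have : (2 * p * n : ℤ) * (-1) < (2 * p * n) * k := by
      nlinarith [sq_nonneg X, mul_nonneg hp'.le (sq_nonneg S), mul_lt_mul_of_pos_left hT hn']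
    exact lt_of_mul_lt_mul_left this hpn.le
  obtain rfl | rfl : k = 0 ∨ k = 1 := by omega
  · refine ⟨X, S, T, ?_, by linarith⟩
    rintro rfl
    apply hne
    have hX0 : X = 0 := pow_eq_zero_iff two_ne_zero |>.1
      (by nlinarith [sq_nonneg X, mul_nonneg hp'.le (sq_nonneg S)] : X ^ 2 = 0)
    have hS0 : S = 0 := by
      have : (p : ℤ) * S ^ 2 = 0 := by
        subst hX0
        linarith
      exact pow_eq_zero_iff two_ne_zero |>.1 ((mul_eq_zero.1 this).resolve_left hp'.ne')
    simp [hX0, hS0]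
  · refine ⟨X * T - 2 * p * S, X + S * T, T ^ 2 + 2 * p, by positivity, ?_⟩
    linear_combination -(T ^ 2 + 2 * p : ℤ) * hk

lemma mul_lt_succ_mul (a b c : ℕ) : a * b * c < (a + 1) * (b + 1) * (c + 1) := by
  rw [show (a + 1) * (b + 1) * (c + 1) = a * b * c + (a * b + b * c + a * c + a + b + c + 1) by ring]
  exact Nat.lt_add_of_pos_right (by positivity)

lemma two_mul_mul_dvd {m p : ℕ} (hm : m % 2 = 1) (hp : p % 2 = 1) (hpm : Nat.Coprime p m) {V : ℤ}
    (h2 : (2 : ℤ) ∣ V) (h3 : (p : ℤ) ∣ V) (h4 : (m : ℤ) ∣ V) : (2 * p * m : ℤ) ∣ V := by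
  have c1 : Nat.Coprime 2 p := Nat.coprime_two_left.2 (Nat.odd_iff.2 hp)
  have c2 : Nat.Coprime 2 m := Nat.coprime_two_left.2 (Nat.odd_iff.2 hm)
  have c3 : IsCoprime (2 : ℤ) p := by exact_mod_cast Nat.isCoprime_iff_coprime.2 c1
  have c4 : IsCoprime (2 * p : ℤ) m := by
    exact_mod_cast Nat.isCoprime_iff_coprime.2 (Nat.Coprime.mul_left c2 hpm)
  exact c4.mul_dvd (c3.mul_dvd h2 h3) h4

lemma solve_odd {n p : ℕ} (hn : n % 2 = 1) (hp : p.Prime) (hp2 : p % 2 = 1) (hpn : n < p)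
    (h2p : n ∣ 2 * p + 1) (hsq : IsSquare (n : ZMod p)) :
    ∃ X S T : ℤ, T ≠ 0 ∧ n * T ^ 2 = X ^ 2 + 2 * p * S ^ 2 := by
  have := Fact.mk hp
  have : NeZero n := ⟨by omega⟩
  obtain ⟨r, hr⟩ := hsq
  obtain ⟨x, s, t, hne, h0, hx, hs, ht⟩ := exists_short
    ((linForm n 1 (-1) 0).prod ((linForm p 1 0 (-r)).prod (linForm 2 1 0 (-1)))) (2 * p * n) n (2 * p)
    (by
      simp only [Fintype.card_prod, ZMod.card]
      convert mul_lt_succ_mul (2 * p * n) n (2 * p) using 1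
      ring)
  simp only [AddMonoidHom.prod_apply, Prod.mk_eq_zero, linForm, AddMonoidHom.coe_mk,
    ZeroHom.coe_mk] at h0
  obtain ⟨hmn, hmp, hm2⟩ := h0
  have d1 : (n : ℤ) ∣ x ^ 2 + 2 * p * s ^ 2 - n * t ^ 2 := by
    rw [← ZMod.intCast_zmod_eq_zero_iff_dvd _ n]
    have : (2 * p + 1 : ZMod n) = 0 := by exact_mod_cast (ZMod.natCast_eq_zero_iff _ n).2 h2p
    push_cast
    rw [ZMod.natCast_self]
    linear_combination (s : ZMod n) ^ 2 * this + (x + s : ZMod n) * hmn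
  have d2 : (p : ℤ) ∣ x ^ 2 + 2 * p * s ^ 2 - n * t ^ 2 := by
    rw [← ZMod.intCast_zmod_eq_zero_iff_dvd _ p]
    push_cast
    rw [ZMod.natCast_self, hr]
    linear_combination (x + r * t : ZMod p) * hmp
  have d3 : (2 : ℤ) ∣ x ^ 2 + 2 * p * s ^ 2 - n * t ^ 2 := by
    have h2 : ((2 : ℕ) : ℤ) ∣ x - t := by
      rw [← ZMod.intCast_zmod_eq_zero_iff_dvd _ 2]
      push_cast
      linear_combination hm2
    obtain ⟨j, hj⟩ := h2
    push_cast at hj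
    obtain rfl : x = 2 * j + t := by linarith
    obtain ⟨i, hi⟩ : ∃ i : ℤ, (n : ℤ) = 2 * i + 1 := ⟨n / 2, by omega⟩
    exact ⟨2 * j ^ 2 + 2 * j * t + p * s ^ 2 - i * t ^ 2, by rw [hi]; ring⟩
  have hp3 : 2 < p := by
    have := hp.two_le
    omega
  have hpn' : ¬ p ∣ n := Nat.not_dvd_of_pos_of_lt (by omega) hpn
  have hp2' : ¬ p ∣ 2 := Nat.not_dvd_of_pos_of_lt (by omega) hp3
  have hdvd := two_mul_mul_dvd hn hp2 ((Nat.Prime.coprime_iff_not_dvd hp).2 hpn') d3 d2 d1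
  push_cast at hx hs ht
  refine solve_of_short (by omega) hp hne hdvd (lt_of_le_of_ne hx ?_) hs (lt_of_le_of_ne ht ?_)
  · have h := sq_ne_prime_mul hp (m := 2 * n) (fun h => (hp.dvd_mul.1 h).elim hp2' hpn') x
    rwa [show (p : ℤ) * (2 * n : ℕ) = 2 * p * n by push_cast; ring] at h
  · have h := sq_ne_prime_mul hp hp2' t
    rwa [show (p : ℤ) * (2 : ℕ) = 2 * p by push_cast; ring] at h

/-- The case `n = 2m`, where `X = 2x` is even and the form becomes `2 (2x² + p S² - m T²)`. -/
lemma solve_even {m p : ℕ} (hm : m % 2 = 1) (hp : p.Prime) (hp2 : p % 2 = 1) (hpm : m < p)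
    (h2p : m ∣ 2 * p + 1) (hsq : IsSquare ((2 * m : ℕ) : ZMod p)) :
    ∃ X S T : ℤ, T ≠ 0 ∧ (2 * m : ℕ) * T ^ 2 = X ^ 2 + 2 * p * S ^ 2 := by
  have := Fact.mk hp
  have : NeZero m := ⟨by omega⟩
  obtain ⟨r, hr⟩ := hsq
  obtain ⟨x, s, t, hne, h0, hx, hs, ht⟩ := exists_short
    ((linForm m 2 (-1) 0).prod ((linForm p 2 0 (-r)).prod (linForm 2 0 1 (-1)))) (p * m) (2 * m)
    (2 * p) (by
      simp only [Fintype.card_prod, ZMod.card]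
      convert mul_lt_succ_mul (p * m) (2 * m) (2 * p) using 1
      ring)
  simp only [AddMonoidHom.prod_apply, Prod.mk_eq_zero, linForm, AddMonoidHom.coe_mk,
    ZeroHom.coe_mk] at h0
  obtain ⟨hmm, hmp, hm2⟩ := h0
  have hp3 : 2 < p := by
    have := hp.two_le
    omega
  have hpm' : ¬ p ∣ m := Nat.not_dvd_of_pos_of_lt (by omega) hpm
  have hp2' : ¬ p ∣ 2 := Nat.not_dvd_of_pos_of_lt (by omega) hp3
  have odd_dvd : ∀ (q : ℕ) (V : ℤ), q % 2 = 1 → (q : ℤ) ∣ 2 * V → (q : ℤ) ∣ V := by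
    intro q V hq h
    refine IsCoprime.dvd_of_dvd_mul_left ?_ h
    exact_mod_cast Nat.isCoprime_iff_coprime.2 (Nat.coprime_two_right.2 (Nat.odd_iff.2 hq))
  have d1 : (m : ℤ) ∣ 2 * x ^ 2 + p * s ^ 2 - m * t ^ 2 := by
    apply odd_dvd m _ hm
    rw [← ZMod.intCast_zmod_eq_zero_iff_dvd _ m]
    have : (2 * p + 1 : ZMod m) = 0 := by exact_mod_cast (ZMod.natCast_eq_zero_iff _ m).2 h2p
    push_cast
    rw [ZMod.natCast_self]
    linear_combination (s : ZMod m) ^ 2 * this + (2 * x + s : ZMod m) * hmm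
  have d2 : (p : ℤ) ∣ 2 * x ^ 2 + p * s ^ 2 - m * t ^ 2 := by
    apply odd_dvd p _ hp2
    rw [← ZMod.intCast_zmod_eq_zero_iff_dvd _ p]
    push_cast at hr ⊢
    rw [ZMod.natCast_self]
    linear_combination (2 * x + r * t : ZMod p) * hmp - (t : ZMod p) ^ 2 * hr
  have d3 : (2 : ℤ) ∣ 2 * x ^ 2 + p * s ^ 2 - m * t ^ 2 := by
    have h2 : ((2 : ℕ) : ℤ) ∣ s - t := by
      rw [← ZMod.intCast_zmod_eq_zero_iff_dvd _ 2]
      push_cast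
      linear_combination hm2
    obtain ⟨j, hj⟩ := h2
    push_cast at hj
    obtain rfl : s = 2 * j + t := by linarith
    obtain ⟨i, hi⟩ : ∃ i : ℤ, (m : ℤ) = 2 * i + 1 := ⟨m / 2, by omega⟩
    obtain ⟨i', hi'⟩ : ∃ i : ℤ, (p : ℤ) = 2 * i + 1 := ⟨p / 2, by omega⟩
    exact ⟨x ^ 2 + p * (2 * j ^ 2 + 2 * j * t) + i' * t ^ 2 - i * t ^ 2, by rw [hi, hi']; ring⟩
  obtain ⟨V, hV⟩ := two_mul_mul_dvd hm hp2 ((Nat.Prime.coprime_iff_not_dvd hp).2 hpm') d3 d2 d1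
  push_cast at hx hs ht
  have hx' : x ^ 2 < p * m := lt_of_le_of_ne hx (sq_ne_prime_mul hp hpm' x)
  refine solve_of_short (X := 2 * x) (S := s) (T := t) (by omega) hp ?_ ⟨V, ?_⟩ ?_ ?_
    (lt_of_le_of_ne ht ?_)
  · simpa using hne
  · push_cast
    linear_combination 2 * hV
  · push_cast
    linarith
  · push_cast
    exact hs
  · have h := sq_ne_prime_mul hp hp2' t
    rwa [show (p : ℤ) * (2 : ℕ) = 2 * p by push_cast; ring] at h

/-! ### The auxiliary prime -/

lemma exists_aux_prime (m c B : ℕ) (hm : m % 2 = 1) (hc : c % 2 = 1) :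
    ∃ p, B < p ∧ p.Prime ∧ p % 8 = c % 8 ∧ 3 * m ∣ 2 * p + 1 := by
  have h8 : Nat.Coprime 8 (3 * m) := by
    have : Nat.Coprime 2 (3 * m) := Nat.coprime_two_left.2 (Nat.odd_iff.2 (by omega))
    exact Nat.Coprime.pow_left 3 this
  -- `(3m - 1) / 2` is the residue of `-1 / 2` modulo the odd number `3m`
  obtain ⟨a, ha8, ham⟩ := Nat.chineseRemainder h8 c ((3 * m - 1) / 2)
  have key : ∀ q, q ≡ (3 * m - 1) / 2 [MOD 3 * m] → 3 * m ∣ 2 * q + 1 := by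
    intro q hq
    have h1 : 2 * q + 1 ≡ 2 * ((3 * m - 1) / 2) + 1 [MOD 3 * m] := (hq.mul_left 2).add_right 1
    rw [show 2 * ((3 * m - 1) / 2) + 1 = 3 * m by omega] at h1
    exact (Nat.modEq_zero_iff_dvd).1 (h1.trans (by simp [Nat.ModEq]))
  have hcop : Nat.Coprime a (8 * (3 * m)) := by
    refine Nat.Coprime.mul_right ?_ ?_
    · have h2 : Nat.Coprime a 2 := by
        refine Nat.coprime_two_right.2 (Nat.odd_iff.2 ?_)
        have : a % 8 = c % 8 := ha8
        omega
      exact Nat.Coprime.pow_right 3 h2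
    · have h1 : Nat.Coprime a (2 * a + 1) := by simp
      exact h1.coprime_dvd_right (key a ham)
  obtain ⟨p, hB, hp, hpa⟩ := Nat.forall_exists_prime_gt_and_modEq B (by omega) hcop
  exact ⟨p, hB, hp, (hpa.of_mul_right _).trans ha8, key p ((hpa.of_mul_left _).trans ham)⟩

open scoped NumberTheorySymbols

/-- The congruence on `p` says that `-2p ≡ 1 (mod m)`. -/
lemma jacobi_aux {m p : ℕ} (h : m ∣ 2 * p + 1) : J(p | m) = J(-2 | m) := by
  have h1 : J(-2 | m) * J(p | m) = 1 := by
    rw [← jacobiSym.mul_left, ← jacobiSym.one_left m]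
    apply jacobiSym.mod_left'
    apply Int.ModEq.symm
    rw [Int.modEq_iff_dvd]
    have : (m : ℤ) ∣ 2 * p + 1 := by exact_mod_cast h
    rw [show (-2 * p - 1 : ℤ) = -(2 * p + 1) by ring]
    exact this.neg_right
  rcases Int.mul_eq_one_iff_eq_one_or_neg_one.1 h1 with ⟨h2, h3⟩ | ⟨h2, h3⟩ <;> rw [h2, h3]

/-- By quadratic reciprocity, `n` is a square modulo `p` once `p mod 8` is chosen according to
`n mod 16`, and then `n T²` is represented by `X² + 2p S²`. -/
lemma exists_scaled (n : ℕ) (h4 : n % 4 ≠ 0) (h5 : n % 8 ≠ 5) :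
    ∃ (p : ℕ) (X S T : ℤ), p.Prime ∧ p % 3 = 1 ∧ T ≠ 0 ∧ n * T ^ 2 = X ^ 2 + 2 * p * S ^ 2 := by
  rcases Nat.mod_two_eq_zero_or_one n with hn | hn
  · obtain ⟨m, rfl⟩ := Nat.dvd_of_mod_eq_zero hn
    have hm : m % 2 = 1 := by omega
    obtain ⟨p, hB, hp, hp8, hdvd⟩ := exists_aux_prime m
      (if m % 8 = 1 ∨ m % 8 = 3 then 1 else 5) m hm (by split_ifs <;> rfl)
    have hp2 : p % 2 = 1 := by split_ifs at hp8 <;> omega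
    have := Fact.mk hp
    have hmd : m ∣ 2 * p + 1 := (Dvd.intro_left _ rfl).trans hdvd
    have h3 : 3 ∣ 2 * p + 1 := (Dvd.intro _ rfl).trans hdvd
    have hJ : J((2 * m : ℕ) | p) = 1 := by
      push_cast
      rw [jacobiSym.mul_left, jacobiSym.at_two (Nat.odd_iff.2 hp2),
        ← jacobiSym.quadratic_reciprocity_if hm hp2, jacobi_aux hmd,
        jacobiSym.at_neg_two (Nat.odd_iff.2 hm), ZMod.χ₈_nat_eq_if_mod_eight,
        ZMod.χ₈'_nat_eq_if_mod_eight]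
      split_ifs at hp8 ⊢ <;> omega
    have hsq := ZMod.isSquare_of_jacobiSym_eq_one hJ
    obtain ⟨X, S, T, h⟩ := solve_even hm hp hp2 hB hmd (by exact_mod_cast hsq)
    exact ⟨p, X, S, T, hp, by omega, h⟩
  · obtain ⟨p, hB, hp, hp8, hdvd⟩ := exists_aux_prime n
      (if n % 8 = 7 then 3 else 1) n hn (by split_ifs <;> rfl)
    have hp2 : p % 2 = 1 := by split_ifs at hp8 <;> omega
    have := Fact.mk hp
    have hmd : n ∣ 2 * p + 1 := (Dvd.intro_left _ rfl).trans hdvd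
    have h3 : 3 ∣ 2 * p + 1 := (Dvd.intro _ rfl).trans hdvd
    have hJ : J(n | p) = 1 := by
      rw [← jacobiSym.quadratic_reciprocity_if hn hp2, jacobi_aux hmd,
        jacobiSym.at_neg_two (Nat.odd_iff.2 hn), ZMod.χ₈'_nat_eq_if_mod_eight]
      split_ifs at hp8 ⊢ <;> omega
    have hsq := ZMod.isSquare_of_jacobiSym_eq_one hJ
    obtain ⟨X, S, T, h⟩ := solve_odd hn hp hp2 hB hmd (by exact_mod_cast hsq)
    exact ⟨p, X, S, T, hp, by omega, h⟩

lemma represented (n : ℕ) : (¬ ∃ k l : ℕ, n = 4 ^ k * (8 * l + 5)) →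
    ∃ x y z : ℤ, (n : ℤ) = x ^ 2 + 2 * (y ^ 2 + y * z + z ^ 2) := by
  induction n using Nat.strong_induction_on with
  | _ n ih =>
  intro hn
  rcases Nat.eq_zero_or_pos n with rfl | hpos
  · exact ⟨0, 0, 0, by simp⟩
  by_cases h4 : n % 4 = 0
  · obtain ⟨m, rfl⟩ := Nat.dvd_of_mod_eq_zero h4
    obtain ⟨x, y, z, h⟩ := ih m (by omega) (fun ⟨k, l, hkl⟩ => hn ⟨k + 1, l, by rw [hkl]; ring⟩)
    refine ⟨2 * x, 2 * y, 2 * z, ?_⟩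
    push_cast
    linear_combination 4 * h
  · obtain ⟨p, X, S, T, hp, hp3, hT, h⟩ := exists_scaled n h4
      (fun h5 => hn ⟨0, n / 8, by omega⟩)
    obtain ⟨a, b, hab⟩ := prime_eq_norm hp hp3
    refine davenport_cassels n T.natAbs X (a * S) (b * S) (Int.natAbs_pos.2 hT) ?_
    rw [Int.natAbs_sq, h, hab]
    ring

theorem stmt_11 (n : ℕ) :
    (∃ x y z : ℤ, (n : ℤ) = x ^ 2 + 2 * (y ^ 2 + y * z + z ^ 2)) ↔
    ¬ ∃ k l : ℕ, n = 4 ^ k * (8 * l + 5) := by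
  refine ⟨?_, represented n⟩
  rintro ⟨x, y, z, h⟩ ⟨k, l, rfl⟩
  exact not_represented k l x y z (by exact_mod_cast h)
end
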